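/- arXiv:1511.00206 — 3 statements merged into one kernel-verified Lean document; each statement's English description precedes it below -/
import Mathlib

section
/- (Existence and uniqueness for rough differential equations.) Fix α ∈ (1/3, 1/2] and T > 0. Let ξ ∈ ℝ^e, let f : ℝ^e → L(ℝ^d, ℝ^e) be bounded with bounded first, second and third derivatives (f ∈ C³_b), and let 𝐗 = (X, 𝕏) be an α-Hölder rough path on [0,T] with values in ℝ^d. Then there exists a unique continuous path Y : [0,T] → ℝ^e such that the pair (Y, f∘Y) is controlled by X and for all t ∈ [0,T], Y_t = ξ + ∫_0^t f(Y_s) d𝐗_s, where the integral is the rough integral of the controlled path (f(Y), Df(Y)f(Y)), i.e. the limit as the mesh tends to 0 of the compensated Riemann sums Σ_{[u,v]∈𝒫} ( f(Y_u) X_{u,v} + Df(Y_u)f(Y_u) 𝕏_{u,v} ) over partitions 𝒫 of [0,t]. -/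
noncomputable section

open scoped BigOperators

/-- `ℝ^d` with the Euclidean norm. -/
abbrev Euc (d : ℕ) := EuclideanSpace ℝ (Fin d)

/-- The set of ratios `‖X_{s,t}‖ / (t-s)^α` over `0 ≤ s < t ≤ T`; its supremum is the
`α`-Hölder norm of the path `X` on `[0,T]`. -/
def holderRatios (α T : ℝ) {V : Type*} [NormedAddCommGroup V] (X : ℝ → V) : Set ℝ :=
  {r | ∃ s t : ℝ, 0 ≤ s ∧ s < t ∧ t ≤ T ∧ r = ‖X t - X s‖ / (t - s) ^ α}

/-- The set of ratios `‖𝕏_{s,t}‖ / |t-s|^{2α}` over `s ≠ t` in `[0,T]`; its supremum is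
the `2α`-Hölder norm of the two-parameter function `𝕏` on `[0,T]²`. -/
def holderRatios2 (α T : ℝ) {V : Type*} [NormedAddCommGroup V] (XX : ℝ → ℝ → V) : Set ℝ :=
  {r | ∃ s t : ℝ, 0 ≤ s ∧ 0 ≤ t ∧ s ≤ T ∧ t ≤ T ∧ s ≠ t ∧
    r = ‖XX s t‖ / |t - s| ^ (2 * α)}

/-- Contraction of a (continuous) bilinear map `B : ℝ^d × ℝ^d → ℝ^e` against a tensor
`M ∈ ℝ^{d×d}`, i.e. `Σ_{i,j} M^{ij} B(e_i, e_j)`. -/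
def contractTensor {d e : ℕ} (B : Euc d →L[ℝ] Euc d →L[ℝ] Euc e)
    (M : EuclideanSpace ℝ (Fin d × Fin d)) : Euc e :=
  ∑ i : Fin d, ∑ j : Fin d,
    M (i, j) • B (EuclideanSpace.single i (1 : ℝ)) (EuclideanSpace.single j (1 : ℝ))

/-- `Y : [0,T] → ℝ^e` solves the RDE `dY = f(Y) d𝐗`, `Y_0 = ξ`: `Y` is continuous,
`(Y, f∘Y)` is controlled by `X`, and for every `t ∈ [0,T]` the compensated Riemann sums
`Σ ( f(Y_u) X_{u,v} + Df(Y_u)f(Y_u) 𝕏_{u,v} )` over partitions of `[0,t]` converge to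
`Y_t - ξ` as the mesh tends to `0`. -/
def SolvesRDE (α T : ℝ) {d e : ℕ} (X : ℝ → Euc d)
    (XX : ℝ → ℝ → EuclideanSpace ℝ (Fin d × Fin d))
    (f : Euc e → (Euc d →L[ℝ] Euc e)) (ξ : Euc e) (Y : ℝ → Euc e) : Prop :=
  ContinuousOn Y (Set.Icc 0 T) ∧
  BddAbove (holderRatios α T (fun t => f (Y t))) ∧
  BddAbove (holderRatios2 α T (fun s t => Y t - Y s - (f (Y s)) (X t - X s))) ∧
  ∀ t ∈ Set.Icc (0 : ℝ) T, ∀ ε : ℝ, 0 < ε → ∃ δ : ℝ, 0 < δ ∧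
    ∀ (k : ℕ) (τ : ℕ → ℝ), τ 0 = 0 → τ k = t →
      (∀ i < k, τ i < τ (i + 1)) → (∀ i < k, τ (i + 1) - τ i ≤ δ) →
      ‖(∑ i ∈ Finset.range k,
          ((f (Y (τ i))) (X (τ (i + 1)) - X (τ i)) +
            contractTensor
              ((fderiv ℝ f (Y (τ i))).comp (f (Y (τ i))))
              (XX (τ i) (τ (i + 1))))) - (Y t - ξ)‖ ≤ ε

/-!
One step of Davie's second-order scheme, `x ↦ x + f(x)X_{s,t} + Df(x)f(x)𝕏_{s,t}`, is a flow up to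
an error of order `3α`: Chen's identity cancels everything of lower order in the composition of two
steps. Since `3α > 1`, halving intervals bounds the local error of the scheme by
`K * |t - s| ^ (3α)`, uniformly in the grid, and this bound survives a limit of refining grids.

A path solves the equation if and only if its local error with respect to the scheme is
`O(|t - s| ^ (3α))`, by the sewing argument for compensated Riemann sums. Two such paths that start
at the same point agree: because one step has Lipschitz second differences and a Lipschitz flow
defect, halving intervals improves any bound on the difference of their local errors by a fixed
factor `κ < 1`.
-/

open Filter Set Topology

section Elementary

theorem rpow_le_half_rpow_mul {x h θ : ℝ} (hx : 0 ≤ x) (hh : 0 ≤ h) (hθ : 0 ≤ θ)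
    (hxh : x ≤ h / 2) : x ^ θ ≤ (1 / 2 : ℝ) ^ θ * h ^ θ := by
  rw [← Real.mul_rpow (by norm_num) hh]
  exact Real.rpow_le_rpow hx (by linarith) hθ

theorem half_rpow_lt_half {θ : ℝ} (hθ : 1 < θ) : (1 / 2 : ℝ) ^ θ < 1 / 2 :=
  Real.rpow_lt_self_of_lt_one (by norm_num) (by norm_num) hθ

theorem exists_pos_lt_of_continuousAt {φ : ℝ → ℝ} {c : ℝ} (hφ : ContinuousAt φ 0)
    (hc : φ 0 < c) : ∃ δ > 0, φ δ < c := by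
  have hlt : ∀ᶠ δ in 𝓝[>] 0, φ δ < c :=
    (hφ.eventually (gt_mem_nhds hc)).filter_mono nhdsWithin_le_nhds
  obtain ⟨δ, hδ, hpos⟩ := (hlt.and self_mem_nhdsWithin).exists
  exact ⟨δ, hpos, hδ⟩

end Elementary

/-- The two-parameter function `A`, restricted to `0 ≤ s ≤ t ≤ T`, is Hölder of exponent `γ` with
constant `K`. -/
structure HolderBound {E : Type*} [NormedAddCommGroup E] (T γ K : ℝ) (A : ℝ → ℝ → E) : Prop where
  nonneg : 0 ≤ K
  norm_le : ∀ ⦃s t : ℝ⦄, 0 ≤ s → s ≤ t → t ≤ T → ‖A s t‖ ≤ K * (t - s) ^ γ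

namespace HolderBound

variable {E : Type*} [NormedAddCommGroup E] {T γ K K' : ℝ} {A B : ℝ → ℝ → E}

theorem mono_const (hA : HolderBound T γ K A) (hK : K ≤ K') : HolderBound T γ K' A where
  nonneg := hA.nonneg.trans hK
  norm_le _ _ hs hst htT := (hA.norm_le hs hst htT).trans
    (mul_le_mul_of_nonneg_right hK (Real.rpow_nonneg (sub_nonneg.2 hst) γ))

theorem eventually_of_bddAbove_holderRatios {X : ℝ → E} (hX : BddAbove (holderRatios γ T X)) :
    ∀ᶠ K in atTop, HolderBound T γ K fun s t => X t - X s := by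
  obtain ⟨M, hM⟩ := hX
  filter_upwards [eventually_ge_atTop M, eventually_ge_atTop 0] with K hK hK0
  refine ⟨hK0, fun s t hs hst htT => ?_⟩
  rcases hst.eq_or_lt with rfl | hlt
  · simpa using mul_nonneg hK0 (Real.rpow_nonneg le_rfl γ)
  · rw [← div_le_iff₀ (Real.rpow_pos_of_pos (sub_pos.2 hlt) γ)]
    exact (hM ⟨s, t, hs, hlt, htT, rfl⟩).trans hK

theorem eventually_of_bddAbove_holderRatios2 (hA : BddAbove (holderRatios2 γ T A))
    (hdiag : ∀ s ∈ Icc 0 T, A s s = 0) : ∀ᶠ K in atTop, HolderBound T (2 * γ) K A := by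
  obtain ⟨M, hM⟩ := hA
  filter_upwards [eventually_ge_atTop M, eventually_ge_atTop 0] with K hK hK0
  refine ⟨hK0, fun s t hs hst htT => ?_⟩
  rcases hst.eq_or_lt with rfl | hlt
  · simpa [hdiag s ⟨hs, htT⟩] using mul_nonneg hK0 (Real.rpow_nonneg le_rfl (2 * γ))
  · rw [← div_le_iff₀ (Real.rpow_pos_of_pos (sub_pos.2 hlt) _), ← abs_of_pos (sub_pos.2 hlt)]
    exact (hM ⟨s, t, hs, hs.trans hst, hst.trans htT, htT, hlt.ne, rfl⟩).trans hK

theorem bddAbove_holderRatios {X : ℝ → E} (hX : HolderBound T γ K fun s t => X t - X s) :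
    BddAbove (holderRatios γ T X) := by
  refine ⟨K, ?_⟩
  rintro _ ⟨s, t, hs, hst, htT, rfl⟩
  exact (div_le_iff₀ (Real.rpow_pos_of_pos (sub_pos.2 hst) γ)).2 (hX.norm_le hs hst.le htT)

theorem bddAbove_holderRatios2 (hA : HolderBound T (2 * γ) K A)
    (hA' : HolderBound T (2 * γ) K' fun s t => A t s) : BddAbove (holderRatios2 γ T A) := by
  refine ⟨max K K', ?_⟩
  rintro _ ⟨s, t, hs, ht, hsT, htT, hne, rfl⟩
  rcases hne.lt_or_gt with hst | hts
  · rw [abs_of_pos (sub_pos.2 hst), div_le_iff₀ (Real.rpow_pos_of_pos (sub_pos.2 hst) _)]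
    exact (hA.mono_const (le_max_left K K')).norm_le hs hst.le htT
  · rw [abs_sub_comm, abs_of_pos (sub_pos.2 hts),
      div_le_iff₀ (Real.rpow_pos_of_pos (sub_pos.2 hts) _)]
    exact (hA'.mono_const (le_max_right K K')).norm_le ht hts.le hsT

theorem continuousOn {X : ℝ → E} (hX : HolderBound T γ K fun s t => X t - X s) (hγ : 0 < γ) :
    ContinuousOn X (Icc 0 T) := by
  have hnorm : ∀ s ∈ Icc 0 T, ∀ t ∈ Icc 0 T, ‖X t - X s‖ ≤ K * |t - s| ^ γ := by
    intro s hs t ht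
    rcases le_total s t with hst | hts
    · rw [abs_of_nonneg (sub_nonneg.2 hst)]
      exact hX.norm_le hs.1 hst ht.2
    · rw [norm_sub_rev, abs_sub_comm, abs_of_nonneg (sub_nonneg.2 hts)]
      exact hX.norm_le ht.1 hts hs.2
  intro s hs
  have hlim : Tendsto (fun t => K * |t - s| ^ γ) (𝓝[Icc 0 T] s) (𝓝 0) := by
    have hcont : Continuous fun t => K * |t - s| ^ γ :=
      continuous_const.mul ((continuous_id.sub continuous_const).abs.rpow_const
        fun _ => .inr hγ.le)
    simpa [Real.zero_rpow hγ.ne'] using (hcont.tendsto s).mono_left nhdsWithin_le_nhds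
  exact tendsto_iff_norm_sub_tendsto_zero.2 (squeeze_zero' (.of_forall fun _ => norm_nonneg _)
    (eventually_mem_nhdsWithin.mono (hnorm s hs)) hlim)

theorem mono_exponent {β : ℝ} (hA : HolderBound T γ K A) (hT : 0 ≤ T) (hβ : 0 ≤ β)
    (hβγ : β ≤ γ) : HolderBound T β (K * T ^ (γ - β)) A where
  nonneg := mul_nonneg hA.nonneg (Real.rpow_nonneg hT _)
  norm_le s t hs hst htT := by
    have hK := hA.nonneg
    have hts : 0 ≤ t - s := sub_nonneg.2 hst
    calc ‖A s t‖ ≤ K * (t - s) ^ γ := hA.norm_le hs hst htT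
      _ = K * (t - s) ^ (γ - β) * (t - s) ^ β := by
        rw [mul_assoc, ← Real.rpow_add_of_nonneg hts (sub_nonneg.2 hβγ) hβ, sub_add_cancel]
      _ ≤ K * T ^ (γ - β) * (t - s) ^ β := by
        gcongr
        linarith

theorem add (hA : HolderBound T γ K A) (hB : HolderBound T γ K' B) :
    HolderBound T γ (K + K') fun s t => A s t + B s t where
  nonneg := add_nonneg hA.nonneg hB.nonneg
  norm_le _ _ hs hst htT :=
    (norm_add_le_of_le (hA.norm_le hs hst htT) (hB.norm_le hs hst htT)).trans_eq (add_mul ..).symm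

theorem sub (hA : HolderBound T γ K A) (hB : HolderBound T γ K' B) :
    HolderBound T γ (K + K') fun s t => A s t - B s t where
  nonneg := add_nonneg hA.nonneg hB.nonneg
  norm_le _ _ hs hst htT :=
    (norm_sub_le_of_le (hA.norm_le hs hst htT) (hB.norm_le hs hst htT)).trans_eq (add_mul ..).symm

theorem of_norm_le {N : ℝ} (hN : 0 ≤ N) (hA : ∀ s t, ‖A s t‖ ≤ N) : HolderBound T 0 N A where
  nonneg := hN
  norm_le s t _ _ _ := by simpa using hA s t

theorem lipschitz_comp {D : Type*} [NormedAddCommGroup D] {X : ℝ → E} {F : E → D} {N : ℝ}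
    (hX : HolderBound T γ K fun s t => X t - X s) (hN : 0 ≤ N)
    (hF : ∀ x y, ‖F x - F y‖ ≤ N * ‖x - y‖) :
    HolderBound T γ (N * K) fun s t => F (X t) - F (X s) where
  nonneg := mul_nonneg hN hX.nonneg
  norm_le _ _ hs hst htT := (hF _ _).trans <|
    (mul_le_mul_of_nonneg_left (hX.norm_le hs hst htT) hN).trans_eq (mul_assoc ..).symm

variable {D : Type*} [NormedAddCommGroup D] [NormedSpace ℝ D] [NormedSpace ℝ E] {β : ℝ}

theorem clm_apply {φ : ℝ → ℝ → E →L[ℝ] D} (hφ : HolderBound T β K' φ) (hA : HolderBound T γ K A)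
    (hβ : 0 ≤ β) (hγ : 0 ≤ γ) : HolderBound T (β + γ) (K' * K) fun s t => φ s t (A s t) where
  nonneg := mul_nonneg hφ.nonneg hA.nonneg
  norm_le s t hs hst htT := by
    rw [Real.rpow_add_of_nonneg (sub_nonneg.2 hst) hβ hγ, mul_mul_mul_comm]
    exact (φ s t).le_of_opNorm_le_of_le (hφ.norm_le hs hst htT) (hA.norm_le hs hst htT)

end HolderBound

section AlmostFlow

variable {E : Type*} [NormedAddCommGroup E] {T α θ C : ℝ} {g : ℝ → ℝ → E → E}

/-- The error made by the one-step scheme `x ↦ x + g s t x` along the path `y`. -/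
def localError (g : ℝ → ℝ → E → E) (y : ℝ → E) (s t : ℝ) : E := y t - y s - g s t (y s)

/-- The failure of the maps `x ↦ x + g s t x` to compose as a flow. -/
def flowDefect (g : ℝ → ℝ → E → E) (s u t : ℝ) (x : E) : E :=
  g s u x + g u t (x + g s u x) - g s t x

/-- The maps `x ↦ x + g s t x`, `0 ≤ s ≤ t ≤ T`, form an almost flow: Lipschitz perturbations of
the identity of size `(t - s) ^ α`, which compose as a flow up to an error `(t - s) ^ θ`, `θ > 1`.
Only the displacement `g` is recorded. -/
structure IsAlmostFlow (T α θ C : ℝ) (g : ℝ → ℝ → E → E) : Prop where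
  nonneg : 0 ≤ C
  exponent_pos : 0 < α
  one_lt_exponent : 1 < θ
  norm_le : ∀ ⦃s t : ℝ⦄, 0 ≤ s → s ≤ t → t ≤ T → ∀ x, ‖g s t x‖ ≤ C * (t - s) ^ α
  lipschitz : ∀ ⦃s t : ℝ⦄, 0 ≤ s → s ≤ t → t ≤ T → ∀ x y,
    ‖g s t x - g s t y‖ ≤ C * (t - s) ^ α * ‖x - y‖
  defect_le : ∀ ⦃s u t : ℝ⦄, 0 ≤ s → s ≤ u → u ≤ t → t ≤ T → ∀ x,
    ‖flowDefect g s u t x‖ ≤ C * (t - s) ^ θ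

/-- An almost flow is stable if its displacement has bounded second differences and its defect is
Lipschitz in the starting point; this is what uniqueness requires. -/
structure IsStableAlmostFlow (T α θ C : ℝ) (g : ℝ → ℝ → E → E) : Prop
    extends IsAlmostFlow T α θ C g where
  secondDifference_le : ∀ ⦃s t : ℝ⦄, 0 ≤ s → s ≤ t → t ≤ T → ∀ x y v,
    ‖(g s t (x + v) - g s t x) - (g s t (y + v) - g s t y)‖ ≤ C * ‖v‖ * ‖x - y‖
  defect_lipschitz : ∀ ⦃s u t : ℝ⦄, 0 ≤ s → s ≤ u → u ≤ t → t ≤ T → ∀ x y,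
    ‖flowDefect g s u t x - flowDefect g s u t y‖ ≤ C * (t - s) ^ θ * ‖x - y‖

theorem localError_add (y : ℝ → E) (s u t : ℝ) :
    localError g y s t = localError g y u t + localError g y s u
      + (g u t (y u) - g u t (y s + g s u (y s))) + flowDefect g s u t (y s) := by
  simp only [localError, flowDefect]
  abel

theorem add_add_localError (y : ℝ → E) (s t : ℝ) :
    y s + g s t (y s) + localError g y s t = y t := by
  simp only [localError]
  abel

namespace IsAlmostFlow

theorem exponent_nonneg (hg : IsAlmostFlow T α θ C g) : 0 ≤ θ :=
  zero_le_one.trans hg.one_lt_exponent.le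

theorem localError_self (hg : IsAlmostFlow T α θ C g) (y : ℝ → E) {s : ℝ} (hs : 0 ≤ s)
    (hsT : s ≤ T) : localError g y s s = 0 := by
  have hgs : ‖g s s (y s)‖ ≤ 0 := by
    simpa [Real.zero_rpow hg.exponent_pos.ne'] using hg.norm_le hs le_rfl hsT (y s)
  simpa [localError] using hgs

theorem continuous (hg : IsAlmostFlow T α θ C g) {s t : ℝ} (hs : 0 ≤ s) (hst : s ≤ t)
    (htT : t ≤ T) : Continuous (g s t) := by
  have hK : 0 ≤ C * (t - s) ^ α := mul_nonneg hg.nonneg (Real.rpow_nonneg (by linarith) _)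
  refine (LipschitzWith.of_dist_le_mul (K := ⟨_, hK⟩) fun x y => ?_).continuous
  rw [dist_eq_norm, dist_eq_norm]
  exact hg.lipschitz hs hst htT x y

theorem norm_localError_le_add (hg : IsAlmostFlow T α θ C g) (y : ℝ → E) {s u t : ℝ}
    (hs : 0 ≤ s) (hsu : s ≤ u) (hut : u ≤ t) (htT : t ≤ T) :
    ‖localError g y s t‖ ≤ ‖localError g y u t‖ + (1 + C * (t - u) ^ α) * ‖localError g y s u‖
      + C * (t - s) ^ θ := by
  have hlip := hg.lipschitz (hs.trans hsu) hut htT (y u) (y s + g s u (y s))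
  rw [show y u - (y s + g s u (y s)) = localError g y s u by simp only [localError]; abel] at hlip
  rw [localError_add y s u t]
  refine norm_add₄_le.trans ?_
  linarith [hg.defect_le hs hsu hut htT (y s)]

/-- Cutting `[s, t]` at a gap `[u, v]` without error that contains its midpoint gains the factor
`(1 / 2) ^ θ` on both remaining pieces. -/
theorem norm_localError_le_of_halves (hg : IsAlmostFlow T α θ C g) {y : ℝ → E} {s u v t K M : ℝ}
    (hs : 0 ≤ s) (hsu : s ≤ u) (huv : u ≤ v) (hvt : v ≤ t) (htT : t ≤ T) (hK : 0 ≤ K)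
    (hM : C * (t - s) ^ α ≤ M) (hgap : localError g y u v = 0)
    (hul : u - s ≤ (t - s) / 2) (hvl : t - v ≤ (t - s) / 2)
    (hu : ‖localError g y s u‖ ≤ K * (u - s) ^ θ) (hv : ‖localError g y v t‖ ≤ K * (t - v) ^ θ) :
    ‖localError g y s t‖ ≤
      ((1 + (1 + M) ^ 2) * (1 / 2) ^ θ * K + (2 + M) * C) * (t - s) ^ θ := by
  have hC := hg.nonneg
  have hα := hg.exponent_pos
  have hθ := hg.exponent_nonneg
  have hM0 : 0 ≤ M := (mul_nonneg hC (Real.rpow_nonneg (by linarith) _)).trans hM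
  have hle (a b : ℝ) (ha : s ≤ a) (hab : a ≤ b) (hb : b ≤ t) : C * (b - a) ^ α ≤ M :=
    le_trans (by gcongr) hM
  have hhalf (x : ℝ) (hx : 0 ≤ x) (hx2 : x ≤ (t - s) / 2) :
      K * x ^ θ ≤ K * ((1 / 2) ^ θ * (t - s) ^ θ) := by
    gcongr
    exact rpow_le_half_rpow_mul hx (by linarith) hθ hx2
  set D := K * ((1 / 2) ^ θ * (t - s) ^ θ) with hD
  have hsv : ‖localError g y s v‖ ≤ (1 + M) * D + C * (t - s) ^ θ := by
    have h := hg.norm_localError_le_add y hs hsu huv (hvt.trans htT)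
    rw [hgap, norm_zero, zero_add] at h
    have hvs : 0 ≤ v - s := by linarith
    refine h.trans ?_
    gcongr
    · exact hle u v hsu huv hvt
    · exact hu.trans (hhalf _ (by linarith) hul)
  calc ‖localError g y s t‖
      ≤ ‖localError g y v t‖ + (1 + C * (t - v) ^ α) * ‖localError g y s v‖ + C * (t - s) ^ θ :=
        hg.norm_localError_le_add y hs (hsu.trans huv) hvt htT
    _ ≤ D + (1 + M) * ((1 + M) * D + C * (t - s) ^ θ) + C * (t - s) ^ θ := by
        gcongr
        · exact hv.trans (hhalf _ (by linarith) hvl)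
        · exact hle v t (hsu.trans huv) hvt le_rfl
    _ = _ := by rw [hD]; ring

end IsAlmostFlow

/-- `y` follows the one-step scheme `g` on the grid `P`: there is no error between consecutive
points. -/
def IsEulerScheme (g : ℝ → ℝ → E → E) (P : Finset ℝ) (y : ℝ → E) : Prop :=
  ∀ s ∈ P, ∀ t ∈ P, s < t → (∀ r ∈ P, r ≤ s ∨ t ≤ r) → localError g y s t = 0

/-- The local error of `y` is at most `K * (t - s) ^ θ` between points of the grid `P` at distance
at most `h`. -/
def GridErrorBound (g : ℝ → ℝ → E → E) (θ K h : ℝ) (P : Finset ℝ) (y : ℝ → E) : Prop :=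
  ∀ s ∈ P, ∀ t ∈ P, s ≤ t → t - s ≤ h → ‖localError g y s t‖ ≤ K * (t - s) ^ θ

theorem exists_isEulerScheme (g : ℝ → ℝ → E → E) (ξ : E) {a : ℝ} (P : Finset ℝ)
    (hP : ∀ s ∈ P, a ≤ s) : ∃ y, y a = ξ ∧ IsEulerScheme g P y := by
  induction P using Finset.induction_on_max with
  | empty => exact ⟨fun _ => ξ, rfl, by simp [IsEulerScheme]⟩
  | insert b P hb ih =>
    obtain ⟨y, hya, hy⟩ := ih fun s hs => hP s (Finset.mem_insert_of_mem hs)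
    rcases P.eq_empty_or_nonempty with rfl | hne
    · refine ⟨fun _ => ξ, rfl, fun s hs t ht hst => ?_⟩
      simp only [insert_empty_eq, Finset.mem_singleton] at hs ht
      exact absurd hst (by simp [hs, ht])
    set c := P.max' hne
    have hc : c ∈ P := P.max'_mem hne
    have hac : a ≤ c := hP c (Finset.mem_insert_of_mem hc)
    have hne_b (s : ℝ) (hs : s ∈ P) : s ≠ b := (hb s hs).ne
    refine ⟨Function.update y b (y c + g c b (y c)), ?_, fun s hs t ht hst hgap => ?_⟩
    · rw [Function.update_of_ne (hac.trans_lt (hb c hc)).ne, hya]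
    have hsP : s ∈ P := by
      rcases Finset.mem_insert.1 hs with rfl | hs
      · rcases Finset.mem_insert.1 ht with rfl | ht
        exacts [absurd hst (lt_irrefl _), absurd hst (hb t ht).not_gt]
      · exact hs
    rcases Finset.mem_insert.1 ht with rfl | ht
    · have hsc : s = c := le_antisymm (P.le_max' s hsP)
        ((hgap c (Finset.mem_insert_of_mem hc)).resolve_right (hb c hc).not_ge)
      simp [hsc, localError, Function.update_of_ne (hne_b c hc)]
    · have hold := hy s hsP t ht hst fun r hr => hgap r (Finset.mem_insert_of_mem hr)
      simpa only [localError, Function.update_of_ne (hne_b s hsP),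
        Function.update_of_ne (hne_b t ht)] using hold

theorem exists_consecutive_around {β : Type*} [LinearOrder β] {P : Finset β} {s m t : β}
    (hs : s ∈ P) (ht : t ∈ P) (hsm : s ≤ m) (hmt : m < t) :
    ∃ u ∈ P, ∃ v ∈ P, s ≤ u ∧ u ≤ m ∧ m < v ∧ v ≤ t ∧ ∀ r ∈ P, r ≤ u ∨ v ≤ r := by
  have hs' : s ∈ P.filter (· ≤ m) := Finset.mem_filter.2 ⟨hs, hsm⟩
  have ht' : t ∈ P.filter (m < ·) := Finset.mem_filter.2 ⟨ht, hmt⟩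
  obtain ⟨hu, hum⟩ := Finset.mem_filter.1 (Finset.max'_mem _ ⟨s, hs'⟩)
  obtain ⟨hv, hmv⟩ := Finset.mem_filter.1 (Finset.min'_mem _ ⟨t, ht'⟩)
  refine ⟨_, hu, _, hv, Finset.le_max' _ _ hs', hum, hmv, Finset.min'_le _ _ ht', fun r hr => ?_⟩
  exact (le_or_gt r m).imp (fun h => Finset.le_max' _ _ (Finset.mem_filter.2 ⟨hr, h⟩))
    (fun h => Finset.min'_le _ _ (Finset.mem_filter.2 ⟨hr, h⟩))

namespace IsAlmostFlow

theorem norm_localError_le_of_gridErrorBound_half (hg : IsAlmostFlow T α θ C g) {P : Finset ℝ}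
    {y : ℝ → E} (hy : IsEulerScheme g P y) (hP : ↑P ⊆ Icc 0 T) {s t K M : ℝ} (hs : s ∈ P)
    (ht : t ∈ P) (hst : s < t) (hK : 0 ≤ K) (hM : C * (t - s) ^ α ≤ M)
    (hbound : GridErrorBound g θ K ((t - s) / 2) P y) :
    ‖localError g y s t‖ ≤
      ((1 + (1 + M) ^ 2) * (1 / 2) ^ θ * K + (2 + M) * C) * (t - s) ^ θ := by
  obtain ⟨u, hu, v, hv, hsu, hum, hmv, hvt, hgap⟩ :=
    exists_consecutive_around hs ht (m := (s + t) / 2) (by linarith) (by linarith)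
  have hul : u - s ≤ (t - s) / 2 := by linarith
  have hvl : t - v ≤ (t - s) / 2 := by linarith
  exact hg.norm_localError_le_of_halves (hP hs).1 hsu (hum.trans hmv.le) hvt (hP ht).2 hK hM
    (hy u hu v hv (hum.trans_lt hmv) hgap) hul hvl (hbound s hs u hu hsu hul)
    (hbound v hv t ht hvt hvl)

theorem norm_localError_self_le (hg : IsAlmostFlow T α θ C g) (y : ℝ → E) {s : ℝ}
    (hs : s ∈ Icc 0 T) (K : ℝ) : ‖localError g y s s‖ ≤ K * (s - s) ^ θ := by
  have hθ : θ ≠ 0 := (zero_lt_one.trans hg.one_lt_exponent).ne'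
  simp [hg.localError_self y hs.1 hs.2, Real.zero_rpow hθ]

/-- It suffices to look at a shortest pair of grid points which violates the bound. -/
theorem gridErrorBound_of_fixedPoint (hg : IsAlmostFlow T α θ C g) {P : Finset ℝ} {y : ℝ → E}
    (hy : IsEulerScheme g P y) (hP : ↑P ⊆ Icc 0 T) {K M h : ℝ} (hK : 0 ≤ K)
    (hM : C * h ^ α ≤ M) (hfix : (1 + (1 + M) ^ 2) * (1 / 2) ^ θ * K + (2 + M) * C = K) :
    GridErrorBound g θ K h P y := by
  by_contra hbad
  obtain ⟨s₀, hs₀, t₀, ht₀, hbad₀⟩ : ∃ s ∈ P, ∃ t ∈ P, s ≤ t ∧ t - s ≤ h ∧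
      K * (t - s) ^ θ < ‖localError g y s t‖ := by
    simpa [GridErrorBound] using hbad
  obtain ⟨⟨s, t⟩, hmem, hmin⟩ := ((P ×ˢ P).filter fun p => p.1 ≤ p.2 ∧ p.2 - p.1 ≤ h ∧
    K * (p.2 - p.1) ^ θ < ‖localError g y p.1 p.2‖).exists_min_image (fun p => p.2 - p.1)
      ⟨(s₀, t₀), Finset.mem_filter.2 ⟨Finset.mem_product.2 ⟨hs₀, ht₀⟩, hbad₀⟩⟩
  simp only [Finset.mem_filter, Finset.mem_product, Prod.forall] at hmem hmin
  obtain ⟨⟨hs, ht⟩, hst, hlen, hviol⟩ := hmem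
  have hlt : s < t := hst.lt_of_ne fun heq => by
    subst heq
    exact hviol.not_ge (hg.norm_localError_self_le y (hP hs) K)
  have hMst : C * (t - s) ^ α ≤ M := le_trans (mul_le_mul_of_nonneg_left
    (Real.rpow_le_rpow (by linarith) hlen hg.exponent_pos.le) hg.nonneg) hM
  refine hviol.not_ge ((hg.norm_localError_le_of_gridErrorBound_half hy hP hs ht hlt hK hMst
    fun u hu v hv huv hlen' => ?_).trans_eq (by rw [hfix]))
  by_contra! hviol'
  linarith [hmin u v ⟨⟨hu, hv⟩, huv, by linarith, hviol'⟩]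

theorem exists_gridErrorBound_of_small (hg : IsAlmostFlow T α θ C g) :
    ∃ h > 0, ∃ K, 0 ≤ K ∧ ∀ (P : Finset ℝ) (y : ℝ → E), ↑P ⊆ Icc 0 T → IsEulerScheme g P y →
      GridErrorBound g θ K h P y := by
  have hC := hg.nonneg
  have hα := hg.exponent_pos
  obtain ⟨h, hh, hκ⟩ : ∃ h > 0, (1 + (1 + C * h ^ α) ^ 2) * (1 / 2 : ℝ) ^ θ < 1 := by
    refine exists_pos_lt_of_continuousAt (φ := fun h => (1 + (1 + C * h ^ α) ^ 2) * (1 / 2) ^ θ)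
      ?_ ?_
    · have := Real.continuousAt_rpow_const 0 α (Or.inr hα.le)
      fun_prop
    · simp only [Real.zero_rpow hα.ne', mul_zero, add_zero, one_pow]
      linarith [half_rpow_lt_half hg.one_lt_exponent]
  have hκ' : 0 < 1 - (1 + (1 + C * h ^ α) ^ 2) * (1 / 2 : ℝ) ^ θ := sub_pos.2 hκ
  exact ⟨h, hh, (2 + C * h ^ α) * C / (1 - (1 + (1 + C * h ^ α) ^ 2) * (1 / 2) ^ θ),
    by positivity, fun P y hP hy => hg.gridErrorBound_of_fixedPoint hy hP (by positivity) le_rfl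
      (by field_simp; ring)⟩

theorem gridErrorBound_double (hg : IsAlmostFlow T α θ C g) {P : Finset ℝ} {y : ℝ → E}
    (hy : IsEulerScheme g P y) (hP : ↑P ⊆ Icc 0 T) {K h : ℝ} (hK : 0 ≤ K)
    (hbound : GridErrorBound g θ K h P y) :
    GridErrorBound g θ ((1 + (1 + C * T ^ α) ^ 2) * (1 / 2) ^ θ * K + (2 + C * T ^ α) * C)
      (2 * h) P y := by
  intro s hs t ht hst hlen
  rcases hst.eq_or_lt with rfl | hlt
  · exact hg.norm_localError_self_le y (hP hs) _
  refine hg.norm_localError_le_of_gridErrorBound_half hy hP hs ht hlt hK ?_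
    fun u hu v hv huv hlen' => hbound u hu v hv huv (by linarith)
  have hs0 := (hP hs).1
  have htT := (hP ht).2
  exact mul_le_mul_of_nonneg_left
    (Real.rpow_le_rpow (by linarith) (by linarith) hg.exponent_pos.le) hg.nonneg

theorem exists_gridErrorBound (hg : IsAlmostFlow T α θ C g) (hT : 0 ≤ T) :
    ∃ K, 0 ≤ K ∧ ∀ (P : Finset ℝ) (y : ℝ → E), ↑P ⊆ Icc 0 T → IsEulerScheme g P y →
      GridErrorBound g θ K T P y := by
  obtain ⟨h, hh, K, hK, hsmall⟩ := hg.exists_gridErrorBound_of_small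
  have hC := hg.nonneg
  have hiter (n : ℕ) : ∃ K, 0 ≤ K ∧ ∀ (P : Finset ℝ) (y : ℝ → E), ↑P ⊆ Icc 0 T →
      IsEulerScheme g P y → GridErrorBound g θ K (2 ^ n * h) P y := by
    induction n with
    | zero => exact ⟨K, hK, by simpa using hsmall⟩
    | succ n ih =>
      obtain ⟨K, hK, hbound⟩ := ih
      simp only [pow_succ', mul_assoc]
      refine ⟨_, ?_, fun P y hP hy => hg.gridErrorBound_double hy hP hK (hbound P y hP hy)⟩
      positivity
  obtain ⟨n, hn⟩ := pow_unbounded_of_one_lt (T / h) one_lt_two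
  obtain ⟨K, hK, hbound⟩ := hiter n
  rw [div_lt_iff₀ hh] at hn
  exact ⟨K, hK, fun P y hP hy s hs t ht hst hlen =>
    hbound P y hP hy s hs t ht hst (hlen.trans hn.le)⟩

end IsAlmostFlow

theorem exists_tendsto_ultrafilter {ι β : Type*} [ProperSpace E] (U : Ultrafilter ι)
    {y : ι → β → E} {x : E} (hy : ∀ b, ∃ r, ∀ᶠ i in U, y i b ∈ Metric.closedBall x r) :
    ∃ Y : β → E, ∀ b, Tendsto (fun i => y i b) U (𝓝 (Y b)) := by
  have hlim (b : β) : ∃ z, Tendsto (fun i => y i b) U (𝓝 z) := by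
    obtain ⟨r, hr⟩ := hy b
    obtain ⟨z, -, hz⟩ := (isCompact_closedBall x r).ultrafilter_le_nhds (U.map fun i => y i b)
      (le_principal_iff.2 hr)
    exact ⟨z, hz⟩
  choose Y hY using hlim
  exact ⟨Y, hY⟩

theorem IsAlmostFlow.exists_path [ProperSpace E] (hg : IsAlmostFlow T α θ C g) (hT : 0 ≤ T)
    (ξ : E) : ∃ Y : ℝ → E, Y 0 = ξ ∧ ∃ K, HolderBound T θ K (localError g Y) := by
  obtain ⟨K, hK, hbound⟩ := hg.exists_gridErrorBound hT
  let grid (P : Finset (Icc 0 T)) : Finset ℝ := P.map (.subtype _)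
  have hgrid (P) : ↑(grid P) ⊆ Icc 0 T := by simp [grid]
  choose y hy0 hy using fun P => exists_isEulerScheme g ξ (grid P) fun s hs => (hgrid P hs).1
  let U : Ultrafilter (Finset (Icc 0 T)) := Ultrafilter.of atTop
  have hmem (t : Icc 0 T) : ∀ᶠ P in U, (t : ℝ) ∈ grid P :=
    Ultrafilter.of_le _ <| (eventually_ge_atTop {t}).mono fun _ hP =>
      Finset.mem_map_of_mem _ (hP (Finset.mem_singleton_self t))
  have herr (s t : Icc 0 T) (hst : s ≤ t) :
      ∀ᶠ P in U, ‖localError g (y P) s t‖ ≤ K * (t - s : ℝ) ^ θ := by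
    filter_upwards [hmem s, hmem t] with P hs ht
    exact hbound _ _ (hgrid P) (hy P) s hs t ht hst (by linarith [s.2.1, t.2.2])
  obtain ⟨Y, hY⟩ := exists_tendsto_ultrafilter U (y := fun P (t : Icc 0 T) => y P t) (x := ξ)
    fun t => ⟨K * (t : ℝ) ^ θ + C * (t : ℝ) ^ α, by
      filter_upwards [herr ⟨0, le_rfl, hT⟩ t t.2.1] with P hP
      rw [mem_closedBall_iff_norm, ← add_add_localError (g := g) (y P) 0 t, hy0, add_assoc,
        add_sub_cancel_left, add_comm]
      exact norm_add_le_of_le (by simpa using hP) (by simpa using hg.norm_le le_rfl t.2.1 t.2.2 ξ)⟩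
  refine ⟨IccExtend hT Y, ?_, K, hK, fun s t hs hst htT => ?_⟩
  · have h0 := hY ⟨0, le_rfl, hT⟩
    simp only [hy0] at h0
    rw [IccExtend_of_mem hT _ ⟨le_rfl, hT⟩]
    exact tendsto_nhds_unique h0 tendsto_const_nhds
  · lift s to Icc 0 T using ⟨hs, hst.trans htT⟩
    lift t to Icc 0 T using ⟨hs.trans hst, htT⟩
    have hlim := (((hY t).sub (hY s)).sub
      (((hg.continuous hs hst htT).tendsto (Y s)).comp (hY s))).norm
    simpa only [localError, IccExtend_val] using le_of_tendsto hlim (herr s t hst)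

namespace IsStableAlmostFlow

variable {Y Z : ℝ → E} {K : ℝ}

theorem norm_add_sub_add_le (hg : IsStableAlmostFlow T α θ C g) {s u : ℝ} (hs : 0 ≤ s)
    (hsu : s ≤ u) (huT : u ≤ T) (x y : E) :
    ‖x + g s u x - (y + g s u y)‖ ≤ (1 + C * T ^ α) * ‖x - y‖ := by
  have hC := hg.nonneg
  have hα := hg.exponent_pos
  calc ‖x + g s u x - (y + g s u y)‖ = ‖(x - y) + (g s u x - g s u y)‖ := by congr 1; abel
    _ ≤ ‖x - y‖ + C * (u - s) ^ α * ‖x - y‖ :=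
      norm_add_le_of_le le_rfl (hg.lipschitz hs hsu huT x y)
    _ ≤ ‖x - y‖ + C * T ^ α * ‖x - y‖ := by
      have : u - s ≤ T := by linarith
      have : 0 ≤ u - s := by linarith
      gcongr
    _ = _ := by ring

theorem norm_localError_sub_le (hg : IsStableAlmostFlow T α θ C g)
    (hZ : HolderBound T θ K (localError g Z)) {s u t : ℝ} (hs : 0 ≤ s) (hsu : s ≤ u)
    (hut : u ≤ t) (htT : t ≤ T) :
    ‖localError g Z s t - localError g Y s t‖ ≤ ‖localError g Z u t - localError g Y u t‖
      + (1 + C * (t - s) ^ α) * ‖localError g Z s u - localError g Y s u‖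
      + (C * K * (1 + C * T ^ α) + C) * (t - s) ^ θ * ‖Z s - Y s‖ := by
  have hC := hg.nonneg
  have hK := hZ.nonneg
  have hα := hg.exponent_pos
  have hθ := hg.exponent_nonneg
  have : 0 ≤ u - s := by linarith
  have : 0 ≤ t - u := by linarith
  set p := Z s + g s u (Z s) with hp
  set q := Y s + g s u (Y s) with hq
  set i := localError g Z s u with hi
  set j := localError g Y s u with hj
  have hZu : p + i = Z u := add_add_localError Z s u
  have hYu : q + j = Y u := add_add_localError Y s u
  have hsplit : localError g Z s t - localError g Y s t =
      (localError g Z u t - localError g Y u t + (i - j) + (g u t (q + i) - g u t (q + j)))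
      + ((g u t (p + i) - g u t p) - (g u t (q + i) - g u t q))
      + (flowDefect g s u t (Z s) - flowDefect g s u t (Y s)) := by
    rw [localError_add Z s u t, localError_add Y s u t, ← hp, ← hq, ← hi, ← hj, hZu, hYu]
    abel
  have hlip : ‖g u t (q + i) - g u t (q + j)‖ ≤ C * (t - s) ^ α * ‖i - j‖ := by
    have h := hg.lipschitz (hs.trans hsu) hut htT (q + i) (q + j)
    rw [add_sub_add_left_eq_sub] at h
    exact h.trans (by gcongr)
  have hi_le : ‖i‖ ≤ K * (t - s) ^ θ :=
    (hZ.norm_le hs hsu (hut.trans htT)).trans (by gcongr)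
  have hsecond : ‖(g u t (p + i) - g u t p) - (g u t (q + i) - g u t q)‖ ≤
      C * (K * (t - s) ^ θ) * ((1 + C * T ^ α) * ‖Z s - Y s‖) := by
    have : 0 ≤ C * (K * (t - s) ^ θ) := mul_nonneg hC ((norm_nonneg i).trans hi_le)
    refine (hg.secondDifference_le (hs.trans hsu) hut htT p q i).trans ?_
    gcongr
    exact hg.norm_add_sub_add_le hs hsu (hut.trans htT) _ _
  rw [hsplit]
  refine norm_add₃_le.trans ?_
  have hfirst := norm_add₃_le (a := localError g Z u t - localError g Y u t) (b := i - j)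
    (c := g u t (q + i) - g u t (q + j))
  linarith [hg.defect_lipschitz hs hsu hut htT (Z s) (Y s)]

/-- If `Z` and `Y` agree at `a`, then `Z s - Y s` is a difference of local errors on `[a, s]`, so
halving intervals improves any bound on that difference by the factor `κ`. -/
theorem norm_localError_sub_le_mul (hg : IsStableAlmostFlow T α θ C g)
    (hZ : HolderBound T θ K (localError g Z)) {a b B κ : ℝ} (ha : 0 ≤ a) (hbT : b ≤ T)
    (hagree : Z a = Y a) (hB : 0 ≤ B)
    (hκ : (2 + C * (b - a) ^ α) * (1 / 2) ^ θ
      + (C * K * (1 + C * T ^ α) + C) * (b - a) ^ θ ≤ κ)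
    (hbound : ∀ s t, a ≤ s → s ≤ t → t ≤ b →
      ‖localError g Z s t - localError g Y s t‖ ≤ B * (t - s) ^ θ)
    {s t : ℝ} (has : a ≤ s) (hst : s ≤ t) (htb : t ≤ b) :
    ‖localError g Z s t - localError g Y s t‖ ≤ κ * B * (t - s) ^ θ := by
  have hC := hg.nonneg
  have hK := hZ.nonneg
  have hα := hg.exponent_pos
  have hθ := hg.exponent_nonneg
  have hT : 0 ≤ T := by linarith
  have hts : 0 ≤ t - s := by linarith
  have : 0 ≤ s - a := by linarith
  have hba : 0 ≤ b - a := by linarith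
  have hhalf (x : ℝ) (hx : x = (t - s) / 2) : B * x ^ θ ≤ B * ((1 / 2) ^ θ * (t - s) ^ θ) :=
    mul_le_mul_of_nonneg_left (rpow_le_half_rpow_mul (by linarith) hts hθ hx.le) hB
  have hdiff : ‖Z s - Y s‖ ≤ B * (b - a) ^ θ := by
    have h := hbound a s le_rfl has (hst.trans htb)
    rw [show localError g Z a s - localError g Y a s = Z s - Y s by
      simp only [localError, hagree]; abel] at h
    exact h.trans (by gcongr; linarith)
  set m := (s + t) / 2 with hm
  calc ‖localError g Z s t - localError g Y s t‖
      ≤ ‖localError g Z m t - localError g Y m t‖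
        + (1 + C * (t - s) ^ α) * ‖localError g Z s m - localError g Y s m‖
        + (C * K * (1 + C * T ^ α) + C) * (t - s) ^ θ * ‖Z s - Y s‖ :=
        hg.norm_localError_sub_le hZ (ha.trans has) (by linarith) (by linarith) (htb.trans hbT)
    _ ≤ B * ((1 / 2) ^ θ * (t - s) ^ θ)
        + (1 + C * (b - a) ^ α) * (B * ((1 / 2) ^ θ * (t - s) ^ θ))
        + (C * K * (1 + C * T ^ α) + C) * (t - s) ^ θ * (B * (b - a) ^ θ) := by
        gcongr
        · exact (hbound m t (by linarith) (by linarith) htb).trans (hhalf _ (by linarith))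
        · exact (hbound s m has (by linarith) (by linarith)).trans (hhalf _ (by linarith))
    _ = ((2 + C * (b - a) ^ α) * (1 / 2) ^ θ
        + (C * K * (1 + C * T ^ α) + C) * (b - a) ^ θ) * B * (t - s) ^ θ := by ring
    _ ≤ κ * B * (t - s) ^ θ := by gcongr

theorem exists_eq_on_Icc (hg : IsStableAlmostFlow T α θ C g)
    (hY : HolderBound T θ K (localError g Y)) (hZ : HolderBound T θ K (localError g Z)) :
    ∃ h > 0, ∀ a b, 0 ≤ a → a ≤ b → b ≤ T → b - a ≤ h → Z a = Y a → Z b = Y b := by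
  have hC := hg.nonneg
  have hK := hZ.nonneg
  have hα := hg.exponent_pos
  have hθ := hg.exponent_nonneg
  obtain ⟨h, hh, hκ1⟩ : ∃ h > 0, (2 + C * h ^ α) * (1 / 2) ^ θ
      + (C * K * (1 + C * T ^ α) + C) * h ^ θ < 1 := by
    refine exists_pos_lt_of_continuousAt (φ := fun h => (2 + C * h ^ α) * (1 / 2) ^ θ
      + (C * K * (1 + C * T ^ α) + C) * h ^ θ) ?_ ?_
    · have := Real.continuousAt_rpow_const 0 α (Or.inr hα.le)
      have := Real.continuousAt_rpow_const 0 θ (Or.inr hθ)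
      fun_prop
    · simp only [Real.zero_rpow hα.ne', Real.zero_rpow (zero_lt_one.trans hg.one_lt_exponent).ne',
        mul_zero, add_zero]
      linarith [half_rpow_lt_half hg.one_lt_exponent]
  refine ⟨h, hh, fun a b ha hab hbT hlen hagree => ?_⟩
  have hT : 0 ≤ T := by linarith
  have : 0 ≤ b - a := by linarith
  set κ := (2 + C * h ^ α) * (1 / 2) ^ θ + (C * K * (1 + C * T ^ α) + C) * h ^ θ with hκ
  have hκ0 : 0 ≤ κ := by positivity
  have hiter (n : ℕ) : ∀ s t, a ≤ s → s ≤ t → t ≤ b →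
      ‖localError g Z s t - localError g Y s t‖ ≤ κ ^ n * (2 * K) * (t - s) ^ θ := by
    induction n with
    | zero =>
      intro s t has hst htb
      refine (norm_sub_le_of_le (hZ.norm_le (ha.trans has) hst (htb.trans hbT))
        (hY.norm_le (ha.trans has) hst (htb.trans hbT))).trans_eq (by ring)
    | succ n ih =>
      intro s t has hst htb
      rw [pow_succ', mul_assoc κ]
      exact hg.norm_localError_sub_le_mul hZ ha hbT hagree (by positivity) (by rw [hκ]; gcongr)
        ih has hst htb
  have hlim : Tendsto (fun n : ℕ => κ ^ n * (2 * K) * (b - a) ^ θ) atTop (𝓝 0) := by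
    simpa using ((tendsto_pow_atTop_nhds_zero_of_lt_one hκ0 hκ1).mul_const (2 * K)).mul_const
      ((b - a) ^ θ)
  have hzero := ge_of_tendsto' hlim fun n => hiter n a b le_rfl hab le_rfl
  have heq : localError g Z a b - localError g Y a b = Z b - Y b := by
    simp only [localError, hagree]; abel
  rwa [heq, norm_le_zero_iff, sub_eq_zero] at hzero

theorem eq_of_holderBound (hg : IsStableAlmostFlow T α θ C g) {K' : ℝ}
    (hY : HolderBound T θ K (localError g Y)) (hZ : HolderBound T θ K' (localError g Z))
    (h0 : Z 0 = Y 0) {t : ℝ} (ht : t ∈ Icc 0 T) : Z t = Y t := by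
  obtain ⟨h, hh, hlocal⟩ := hg.exists_eq_on_Icc (hY.mono_const (le_max_left K K'))
    (hZ.mono_const (le_max_right K K'))
  have hiter (n : ℕ) : ∀ t ∈ Icc 0 T, t ≤ n * h → Z t = Y t := by
    induction n with
    | zero =>
      intro t ht htn
      rwa [le_antisymm (by simpa using htn) ht.1]
    | succ n ih =>
      intro t ht htn
      rcases le_total t (n * h) with hle | hle
      · exact ih t ht hle
      · have hn : 0 ≤ n * h := by positivity
        push_cast at htn
        exact hlocal (n * h) t hn hle ht.2 (by linarith) (ih _ ⟨hn, hle.trans ht.2⟩ le_rfl)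
  obtain ⟨n, hn⟩ := exists_nat_gt (t / h)
  rw [div_lt_iff₀ hh] at hn
  exact hiter n t ht hn.le

end IsStableAlmostFlow

end AlmostFlow

section RiemannSums

variable {E : Type*} [NormedAddCommGroup E] {T θ C δ δ' s u t : ℝ} {S S' : E} {Ξ : ℝ → ℝ → E}
  {I : ℝ → E}

/-- `S` is the sum of `Ξ` over the intervals of a partition of `[s, t]` of mesh at most `δ`. The
partition is built up interval by interval, from left to right. -/
inductive IsRiemannSum (Ξ : ℝ → ℝ → E) (δ s : ℝ) : ℝ → E → Prop
  | nil : IsRiemannSum Ξ δ s s 0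
  | snoc {u t : ℝ} {S : E} (hS : IsRiemannSum Ξ δ s u S) (hut : u < t) (hmesh : t - u ≤ δ) :
      IsRiemannSum Ξ δ s t (S + Ξ u t)

namespace IsRiemannSum

theorem le (h : IsRiemannSum Ξ δ s t S) : s ≤ t := by
  induction h with
  | nil => exact le_rfl
  | snoc _ hut _ ih => exact ih.trans hut.le

theorem mono (h : IsRiemannSum Ξ δ s t S) (hδ : δ ≤ δ') : IsRiemannSum Ξ δ' s t S := by
  induction h with
  | nil => exact nil
  | snoc _ hut hmesh ih => exact ih.snoc hut (hmesh.trans hδ)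

theorem single (hst : s < t) (hmesh : t - s ≤ δ) : IsRiemannSum Ξ δ s t (Ξ s t) := by
  simpa using (nil (Ξ := Ξ)).snoc hst hmesh

theorem trans (h : IsRiemannSum Ξ δ s u S) (h' : IsRiemannSum Ξ δ u t S') :
    IsRiemannSum Ξ δ s t (S + S') := by
  induction h' with
  | nil => simpa using h
  | snoc _ hut hmesh ih => simpa only [add_assoc] using ih.snoc hut hmesh

theorem of_partition {τ : ℕ → ℝ} {k : ℕ} (hτ : ∀ i < k, τ i < τ (i + 1))
    (hmesh : ∀ i < k, τ (i + 1) - τ i ≤ δ) :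
    IsRiemannSum Ξ δ (τ 0) (τ k) (∑ i ∈ Finset.range k, Ξ (τ i) (τ (i + 1))) := by
  induction k with
  | zero => simpa using nil
  | succ k ih =>
    rw [Finset.sum_range_succ]
    exact (ih (fun i hi => hτ i (hi.trans k.lt_succ_self))
      fun i hi => hmesh i (hi.trans k.lt_succ_self)).snoc (hτ k k.lt_succ_self)
        (hmesh k k.lt_succ_self)

theorem exists_partition (h : IsRiemannSum Ξ δ s t S) : ∃ (k : ℕ) (τ : ℕ → ℝ), τ 0 = s ∧ τ k = t ∧
    (∀ i < k, τ i < τ (i + 1)) ∧ (∀ i < k, τ (i + 1) - τ i ≤ δ) ∧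
    ∑ i ∈ Finset.range k, Ξ (τ i) (τ (i + 1)) = S := by
  induction h with
  | nil => exact ⟨0, fun _ => s, by simp⟩
  | @snoc u t S _ hut hmesh ih =>
    obtain ⟨k, τ, rfl, rfl, hτ, hτmesh, rfl⟩ := ih
    have hold (i : ℕ) (hi : i ≤ k) : Function.update τ (k + 1) t i = τ i :=
      Function.update_of_ne (by omega) _ _
    refine ⟨k + 1, Function.update τ (k + 1) t, hold 0 k.zero_le, Function.update_self .., ?_, ?_,
      ?_⟩
    · refine Nat.forall_lt_succ_right.2 ⟨fun i hi => ?_, ?_⟩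
      · simpa only [hold i hi.le, hold (i + 1) hi] using hτ i hi
      · simpa only [hold k le_rfl, Function.update_self] using hut
    · refine Nat.forall_lt_succ_right.2 ⟨fun i hi => ?_, ?_⟩
      · simpa only [hold i hi.le, hold (i + 1) hi] using hτmesh i hi
      · simpa only [hold k le_rfl, Function.update_self] using hmesh
    · rw [Finset.sum_range_succ, hold k le_rfl, Function.update_self]
      refine congrArg (· + _) (Finset.sum_congr rfl fun i hi => ?_)
      rw [Finset.mem_range] at hi
      rw [hold i hi.le, hold (i + 1) hi]

end IsRiemannSum

/-- `Ξ` is additive over adjacent intervals up to an error `C * (t - s) ^ θ`. -/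
structure IsAlmostAdditive (T θ C : ℝ) (Ξ : ℝ → ℝ → E) : Prop where
  nonneg : 0 ≤ C
  norm_sub_sub_le : ∀ ⦃s u t : ℝ⦄, 0 ≤ s → s ≤ u → u ≤ t → t ≤ T →
    ‖Ξ s t - Ξ s u - Ξ u t‖ ≤ C * (t - s) ^ θ

namespace IsAlmostAdditive

theorem apply_self (hΞ : IsAlmostAdditive T θ C Ξ) (hθ : 0 < θ) (hs : 0 ≤ s) (hsT : s ≤ T) :
    Ξ s s = 0 := by
  simpa [Real.zero_rpow hθ.ne'] using hΞ.norm_sub_sub_le hs le_rfl le_rfl hsT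

theorem norm_add_sub_le_of_midpoint (hΞ : IsAlmostAdditive T θ C Ξ) (hθ : 0 ≤ θ) {K m : ℝ}
    (hK : 0 ≤ K) (hs : 0 ≤ s) (hst : s ≤ t) (htT : t ≤ T) (hm : m = (s + t) / 2)
    (hS : ‖S - Ξ s m‖ ≤ K * (m - s) ^ θ) (hS' : ‖S' - Ξ m t‖ ≤ K * (t - m) ^ θ) :
    ‖S + S' - Ξ s t‖ ≤ (2 * (1 / 2) ^ θ * K + C) * (t - s) ^ θ := by
  have hhalf (x : ℝ) (hx : x = (t - s) / 2) : K * x ^ θ ≤ K * ((1 / 2) ^ θ * (t - s) ^ θ) :=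
    mul_le_mul_of_nonneg_left
      (rpow_le_half_rpow_mul (by linarith) (by linarith) hθ hx.le) hK
  calc ‖S + S' - Ξ s t‖
      = ‖(S - Ξ s m) + (S' - Ξ m t) - (Ξ s t - Ξ s m - Ξ m t)‖ := by congr 1; abel
    _ ≤ K * ((1 / 2) ^ θ * (t - s) ^ θ) + K * ((1 / 2) ^ θ * (t - s) ^ θ) + C * (t - s) ^ θ :=
        norm_sub_le_of_le (norm_add_le_of_le (hS.trans (hhalf _ (by linarith)))
          (hS'.trans (hhalf _ (by linarith))))
          (hΞ.norm_sub_sub_le hs (by linarith) (by linarith) htT)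
    _ = _ := by ring

/-- Summing over a dyadic partition costs a geometric series of ratio `2 * (1 / 2) ^ θ < 1`. -/
theorem exists_isRiemannSum (hΞ : IsAlmostAdditive T θ C Ξ) (hθ : 1 < θ) :
    ∃ K, 0 ≤ K ∧ ∀ δ > 0, ∀ s t, 0 ≤ s → s ≤ t → t ≤ T →
      ∃ S, IsRiemannSum Ξ δ s t S ∧ ‖S - Ξ s t‖ ≤ K * (t - s) ^ θ := by
  have hκ : 0 < 1 - 2 * (1 / 2 : ℝ) ^ θ := by linarith [half_rpow_lt_half hθ]
  obtain ⟨K, hK, hfix⟩ : ∃ K, 0 ≤ K ∧ 2 * (1 / 2) ^ θ * K + C = K :=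
    ⟨C / (1 - 2 * (1 / 2) ^ θ), div_nonneg hΞ.nonneg hκ.le, by
      linear_combination -(mul_div_cancel₀ C hκ.ne')⟩
  refine ⟨K, hK, fun δ hδ => ?_⟩
  have hdyadic (n : ℕ) : ∀ s t, 0 ≤ s → s < t → t ≤ T → t - s ≤ 2 ^ n * δ →
      ∃ S, IsRiemannSum Ξ δ s t S ∧ ‖S - Ξ s t‖ ≤ K * (t - s) ^ θ := by
    induction n with
    | zero =>
      intro s t _ hst _ hlen
      refine ⟨_, .single hst (by simpa using hlen), ?_⟩
      rw [sub_self, norm_zero]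
      exact mul_nonneg hK (Real.rpow_nonneg (by linarith) _)
    | succ n ih =>
      intro s t hs hst htT hlen
      rw [pow_succ] at hlen
      set m := (s + t) / 2 with hm
      obtain ⟨S, hS, hS_le⟩ := ih s m hs (by linarith) (by linarith) (by linarith)
      obtain ⟨S', hS', hS'_le⟩ := ih m t (by linarith) (by linarith) htT (by linarith)
      refine ⟨S + S', hS.trans hS', ?_⟩
      rw [← hfix]
      exact hΞ.norm_add_sub_le_of_midpoint (by linarith) hK hs hst.le htT hm hS_le hS'_le
  intro s t hs hst htT
  rcases hst.eq_or_lt with rfl | hst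
  · refine ⟨0, .nil, ?_⟩
    simp [hΞ.apply_self (zero_lt_one.trans hθ) hs htT, Real.zero_rpow (zero_lt_one.trans hθ).ne']
  · obtain ⟨n, hn⟩ := pow_unbounded_of_one_lt (T / δ) one_lt_two
    rw [div_lt_iff₀ hδ] at hn
    exact hdyadic n s t hs hst htT (by linarith)

end IsAlmostAdditive

/-- For every `t ∈ [0, T]`, the Riemann sums of `Ξ` over partitions of `[0, t]` converge to `I t`
as the mesh tends to `0`. -/
def RiemannSumsConverge (Ξ : ℝ → ℝ → E) (T : ℝ) (I : ℝ → E) : Prop :=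
  ∀ t ∈ Icc 0 T, ∀ ε > 0, ∃ δ > 0, ∀ S, IsRiemannSum Ξ δ 0 t S → ‖S - I t‖ ≤ ε

theorem riemannSumsConverge_iff : RiemannSumsConverge Ξ T I ↔
    ∀ t ∈ Icc 0 T, ∀ ε, 0 < ε → ∃ δ, 0 < δ ∧ ∀ (k : ℕ) (τ : ℕ → ℝ), τ 0 = 0 → τ k = t →
      (∀ i < k, τ i < τ (i + 1)) → (∀ i < k, τ (i + 1) - τ i ≤ δ) →
      ‖∑ i ∈ Finset.range k, Ξ (τ i) (τ (i + 1)) - I t‖ ≤ ε := by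
  refine forall₂_congr fun t _ => forall₂_congr fun ε _ => exists_congr fun δ =>
    and_congr_right fun _ => ⟨fun h k τ h0 hk hτ hmesh => h _ ?_, fun h S hS => ?_⟩
  · rw [← h0, ← hk]
    exact .of_partition hτ hmesh
  · obtain ⟨k, τ, h0, hk, hτ, hmesh, rfl⟩ := hS.exists_partition
    exact h k τ h0 hk hτ hmesh

namespace RiemannSumsConverge

theorem apply_zero (h : RiemannSumsConverge Ξ T I) (hT : 0 ≤ T) : I 0 = 0 := by
  refine norm_le_zero_iff.1 (le_of_forall_pos_le_add fun ε hε => ?_)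
  obtain ⟨δ, -, hδ⟩ := h 0 ⟨le_rfl, hT⟩ ε hε
  simpa using hδ 0 .nil

theorem exists_holderBound (h : RiemannSumsConverge Ξ T I) (hΞ : IsAlmostAdditive T θ C Ξ)
    (hθ : 1 < θ) : ∃ K, HolderBound T θ K fun s t => I t - I s - Ξ s t := by
  obtain ⟨K, hK, hsum⟩ := hΞ.exists_isRiemannSum hθ
  refine ⟨K, hK, fun s t hs hst htT => le_of_forall_pos_le_add fun ε hε => ?_⟩
  obtain ⟨δ₁, hδ₁, hs_lim⟩ := h s ⟨hs, hst.trans htT⟩ (ε / 2) (half_pos hε)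
  obtain ⟨δ₂, hδ₂, ht_lim⟩ := h t ⟨hs.trans hst, htT⟩ (ε / 2) (half_pos hε)
  have hδ : 0 < min δ₁ δ₂ := lt_min hδ₁ hδ₂
  obtain ⟨S, hS, -⟩ := hsum _ hδ 0 s le_rfl hs (hst.trans htT)
  obtain ⟨S', hS', hS'_le⟩ := hsum _ hδ s t hs hst htT
  calc ‖I t - I s - Ξ s t‖
      = ‖(S' - Ξ s t) + (S - I s) - (S + S' - I t)‖ := by congr 1; abel
    _ ≤ K * (t - s) ^ θ + ε / 2 + ε / 2 :=
        norm_sub_le_of_le (norm_add_le_of_le hS'_le (hs_lim S (hS.mono (min_le_left _ _))))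
          (ht_lim _ ((hS.trans hS').mono (min_le_right _ _)))
    _ = K * (t - s) ^ θ + ε := by ring

end RiemannSumsConverge

theorem IsRiemannSum.norm_sub_sub_le {Y : ℝ → E} {K : ℝ}
    (hY : HolderBound T θ K fun s t => Y t - Y s - Ξ s t) (hθ : 1 ≤ θ)
    (h : IsRiemannSum Ξ δ s t S) (hs : 0 ≤ s) (htT : t ≤ T) :
    ‖S - (Y t - Y s)‖ ≤ K * δ ^ (θ - 1) * (t - s) := by
  induction h with
  | nil => simp
  | @snoc u t S hS hut hmesh ih =>
    have hK := hY.nonneg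
    have htu : 0 < t - u := sub_pos.2 hut
    calc ‖S + Ξ u t - (Y t - Y s)‖ = ‖(S - (Y u - Y s)) - (Y t - Y u - Ξ u t)‖ := by
          congr 1; abel
      _ ≤ K * δ ^ (θ - 1) * (u - s) + K * (t - u) ^ θ :=
          norm_sub_le_of_le (ih (hut.le.trans htT)) (hY.norm_le (hs.trans hS.le) hut.le htT)
      _ = K * δ ^ (θ - 1) * (u - s) + K * ((t - u) ^ (θ - 1) * (t - u)) := by
          rw [← Real.rpow_add_one htu.ne', sub_add_cancel]
      _ ≤ K * δ ^ (θ - 1) * (u - s) + K * (δ ^ (θ - 1) * (t - u)) := by gcongr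
      _ = K * δ ^ (θ - 1) * (t - s) := by ring

theorem HolderBound.riemannSumsConverge {Y : ℝ → E} {K : ℝ}
    (hY : HolderBound T θ K fun s t => Y t - Y s - Ξ s t) (hθ : 1 < θ) :
    RiemannSumsConverge Ξ T fun t => Y t - Y 0 := by
  intro t ht ε hε
  obtain ⟨δ, hδ, hlt⟩ : ∃ δ > 0, K * δ ^ (θ - 1) * t < ε := by
    refine exists_pos_lt_of_continuousAt (φ := fun δ => K * δ ^ (θ - 1) * t) ?_ ?_
    · have := Real.continuousAt_rpow_const 0 (θ - 1) (Or.inr (by linarith))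
      fun_prop
    · simpa [Real.zero_rpow (sub_pos.2 hθ).ne'] using hε
  refine ⟨δ, hδ, fun S hS => ?_⟩
  simpa using (hS.norm_sub_sub_le hY hθ.le le_rfl ht.2).trans (by simpa using hlt.le)

theorem IsAlmostFlow.isAlmostAdditive_of_localError {α β K : ℝ} {g : ℝ → ℝ → E → E} {Z : ℝ → E}
    (hg : IsAlmostFlow T α (α + β) C g) (hZ : HolderBound T β K (localError g Z)) (hβ : 0 ≤ β) :
    IsAlmostAdditive T (α + β) (C + C * K) fun s t => g s t (Z s) where
  nonneg := add_nonneg hg.nonneg (mul_nonneg hg.nonneg hZ.nonneg)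
  norm_sub_sub_le s u t hs hsu hut htT := by
    have hC := hg.nonneg
    have hK := hZ.nonneg
    have hα := hg.exponent_pos
    have : 0 ≤ u - s := sub_nonneg.2 hsu
    have : 0 ≤ t - u := sub_nonneg.2 hut
    have hts : 0 ≤ t - s := sub_nonneg.2 (hsu.trans hut)
    have hflow := hg.lipschitz (hs.trans hsu) hut htT (Z u) (Z s + g s u (Z s))
    rw [← sub_sub, ← localError] at hflow
    calc ‖g s t (Z s) - g s u (Z s) - g u t (Z u)‖
        = ‖flowDefect g s u t (Z s) + (g u t (Z u) - g u t (Z s + g s u (Z s)))‖ := by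
          rw [← norm_neg, flowDefect]; congr 1; abel
      _ ≤ C * (t - s) ^ (α + β) + C * (t - u) ^ α * (K * (u - s) ^ β) :=
          norm_add_le_of_le (hg.defect_le hs hsu hut htT _)
            (hflow.trans (by gcongr; exact hZ.norm_le hs hsu (hut.trans htT)))
      _ ≤ C * (t - s) ^ (α + β) + C * (t - s) ^ α * (K * (t - s) ^ β) := by gcongr
      _ = (C + C * K) * (t - s) ^ (α + β) := by
          rw [Real.rpow_add_of_nonneg hts hα.le hβ]; ring

end RiemannSums

/-- `F` is bounded, with bounded first and second difference quotients: the finite-difference form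
of `C²_b`. -/
structure BoundedDifferences {E A : Type*} [NormedAddCommGroup E] [NormedAddCommGroup A] (N : ℝ)
    (F : E → A) : Prop where
  norm_le : ∀ x, ‖F x‖ ≤ N
  lipschitz : ∀ x y, ‖F x - F y‖ ≤ N * ‖x - y‖
  secondDifference_le : ∀ x y v, ‖(F (x + v) - F x) - (F (y + v) - F y)‖ ≤ N * ‖v‖ * ‖x - y‖

theorem BoundedDifferences.norm_sub_sub_sub_le {E A : Type*} [NormedAddCommGroup E]
    [NormedAddCommGroup A] {N : ℝ} {F : E → A} (hF : BoundedDifferences N F) (x y v w : E) :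
    ‖(F (x + v) - F x) - (F (y + w) - F y)‖ ≤ N * (‖v‖ * ‖x - y‖ + ‖v - w‖) := by
  have hvw : ‖F (y + v) - F (y + w)‖ ≤ N * ‖v - w‖ := by
    simpa only [add_sub_add_left_eq_sub] using hF.lipschitz (y + v) (y + w)
  calc ‖(F (x + v) - F x) - (F (y + w) - F y)‖
      = ‖((F (x + v) - F x) - (F (y + v) - F y)) + (F (y + v) - F (y + w))‖ := by
        congr 1; abel
    _ ≤ N * ‖v‖ * ‖x - y‖ + N * ‖v - w‖ := norm_add_le_of_le (hF.secondDifference_le x y v) hvw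
    _ = _ := by ring

section BoundedDerivatives

variable {E A B D : Type*} [NormedAddCommGroup E] [NormedSpace ℝ E] [NormedAddCommGroup A]
  [NormedSpace ℝ A] [NormedAddCommGroup B] [NormedSpace ℝ B] [NormedAddCommGroup D]
  [NormedSpace ℝ D] {n : ℕ} {C : ℝ} {F : E → A} {G : E → B}

/-- The class `Cⁿ_b` of functions that are bounded together with their derivatives of order up to
`n`. -/
structure IsBoundedContDiff (n : ℕ) (F : E → A) : Prop where
  contDiff : ContDiff ℝ n F
  bounded : ∀ i ≤ n, ∃ C : ℝ, ∀ x, ‖iteratedFDeriv ℝ i F x‖ ≤ C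

namespace IsBoundedContDiff

theorem of_le {m : ℕ} (hF : IsBoundedContDiff n F) (hmn : m ≤ n) : IsBoundedContDiff m F where
  contDiff := hF.contDiff.of_le (mod_cast hmn)
  bounded i hi := hF.bounded i (hi.trans hmn)

theorem differentiable (hF : IsBoundedContDiff (n + 1) F) : Differentiable ℝ F :=
  hF.contDiff.differentiable (by simp)

theorem fderiv (hF : IsBoundedContDiff (n + 1) F) : IsBoundedContDiff n (fderiv ℝ F) where
  contDiff := hF.contDiff.fderiv_right (by simp)
  bounded i hi := by
    obtain ⟨C, hC⟩ := hF.bounded (i + 1) (by lia)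
    exact ⟨C, fun x => norm_iteratedFDeriv_fderiv.trans_le (hC x)⟩

theorem continuousLinearMap_comp (hF : IsBoundedContDiff n F) (L : A →L[ℝ] B) :
    IsBoundedContDiff n fun x => L (F x) where
  contDiff := L.contDiff.comp hF.contDiff
  bounded i hi := by
    obtain ⟨C, hC⟩ := hF.bounded i hi
    refine ⟨‖L‖ * C, fun x => ?_⟩
    exact (L.norm_iteratedFDeriv_comp_left hF.contDiff.contDiffAt (mod_cast hi)).trans
      (mul_le_mul_of_nonneg_left (hC x) (norm_nonneg L))

theorem bilinear (hF : IsBoundedContDiff n F) (hG : IsBoundedContDiff n G)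
    (L : A →L[ℝ] B →L[ℝ] D) : IsBoundedContDiff n fun x => L (F x) (G x) where
  contDiff := (L.contDiff.comp hF.contDiff).clm_apply hG.contDiff
  bounded i hi := by
    choose! cF hcF using hF.bounded
    choose! cG hcG using hG.bounded
    refine ⟨‖L‖ * ∑ j ∈ Finset.range (i + 1), i.choose j * cF j * cG (i - j), fun x => ?_⟩
    refine (L.norm_iteratedFDeriv_le_of_bilinear hF.contDiff hG.contDiff x
      (mod_cast hi)).trans ?_
    gcongr with j hj
    · exact mul_nonneg (Nat.cast_nonneg _)
        ((norm_nonneg _).trans (hcF j ((Finset.mem_range_succ_iff.1 hj).trans hi) x))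
    · exact hcF j ((Finset.mem_range_succ_iff.1 hj).trans hi) x
    · exact hcG (i - j) ((Nat.sub_le i j).trans hi) x

theorem clm_comp {F : E → B →L[ℝ] D} {G : E → A →L[ℝ] B} (hF : IsBoundedContDiff n F)
    (hG : IsBoundedContDiff n G) : IsBoundedContDiff n fun x => (F x).comp (G x) :=
  bilinear hF hG (ContinuousLinearMap.compL ℝ A B D)

theorem eventually_norm_le (hF : IsBoundedContDiff n F) : ∀ᶠ N in atTop, ∀ x, ‖F x‖ ≤ N := by
  obtain ⟨C, hC⟩ := hF.bounded 0 n.zero_le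
  filter_upwards [eventually_ge_atTop C] with N hN x
  exact (norm_iteratedFDeriv_zero (𝕜 := ℝ) (f := F)).symm.trans_le ((hC x).trans hN)

theorem eventually_lipschitz (hF : IsBoundedContDiff 1 F) :
    ∀ᶠ N in atTop, ∀ x y, ‖F x - F y‖ ≤ N * ‖x - y‖ := by
  filter_upwards [hF.fderiv.eventually_norm_le] with N hN x y
  exact convex_univ.norm_image_sub_le_of_norm_fderiv_le (fun z _ => hF.differentiable z)
    (fun z _ => hN z) (mem_univ y) (mem_univ x)

end IsBoundedContDiff

theorem hasFDerivAt_comp_add_right_sub (hd : Differentiable ℝ F) (v x : E) :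
    HasFDerivAt (fun x => F (x + v) - F x) (fderiv ℝ F (x + v) - fderiv ℝ F x) x :=
  ((hasFDerivAt_comp_add_right v).2 (hd (x + v)).hasFDerivAt).sub (hd x).hasFDerivAt

theorem norm_secondDifference_le (hd : Differentiable ℝ F)
    (hlip : ∀ x y, ‖fderiv ℝ F x - fderiv ℝ F y‖ ≤ C * ‖x - y‖) (x y v : E) :
    ‖(F (x + v) - F x) - (F (y + v) - F y)‖ ≤ C * ‖v‖ * ‖x - y‖ := by
  refine convex_univ.norm_image_sub_le_of_norm_hasFDerivWithin_le
    (fun z _ => (hasFDerivAt_comp_add_right_sub hd v z).hasFDerivWithinAt) (fun z _ => ?_)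
    (mem_univ y) (mem_univ x)
  simpa only [add_sub_cancel_left] using hlip (z + v) z

theorem IsBoundedContDiff.eventually_boundedDifferences (hF : IsBoundedContDiff 2 F) :
    ∀ᶠ N in atTop, BoundedDifferences N F := by
  filter_upwards [hF.eventually_norm_le, (hF.of_le one_le_two).eventually_lipschitz,
    hF.fderiv.eventually_lipschitz] with N hN hlip hlip'
  exact ⟨hN, hlip, norm_secondDifference_le hF.differentiable hlip'⟩

/-- The remainder of the first-order Taylor expansion of `F` at `x`, for the increment `v`. -/
def taylorRemainder (F : E → A) (x v : E) : A := F (x + v) - F x - fderiv ℝ F x v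

@[simp]
theorem taylorRemainder_zero (F : E → A) (x : E) : taylorRemainder F x 0 = 0 := by
  simp [taylorRemainder]

theorem norm_taylorRemainder_sub_increment_le (hd : Differentiable ℝ F)
    (hlip : ∀ x y, ‖fderiv ℝ F x - fderiv ℝ F y‖ ≤ C * ‖x - y‖) (hC : 0 ≤ C) (x v w : E) :
    ‖taylorRemainder F x v - taylorRemainder F x w‖ ≤ C * (‖v‖ + ‖w‖) * ‖v - w‖ := by
  have hball : ∀ z ∈ Metric.closedBall x (‖v‖ + ‖w‖),
      ‖fderiv ℝ F z - fderiv ℝ F x‖ ≤ C * (‖v‖ + ‖w‖) := fun z hz => by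
    rw [mem_closedBall_iff_norm] at hz
    exact (hlip z x).trans (mul_le_mul_of_nonneg_left hz hC)
  have hvw := (convex_closedBall x (‖v‖ + ‖w‖)).norm_image_sub_le_of_norm_hasFDerivWithin_le'
    (fun z _ => (hd z).hasFDerivAt.hasFDerivWithinAt) hball
    (show x + w ∈ _ by simp) (show x + v ∈ _ by simp)
  rw [add_sub_add_left_eq_sub] at hvw
  convert hvw using 2
  simp only [taylorRemainder, map_sub]
  abel

theorem norm_taylorRemainder_sub_point_le (hd : Differentiable ℝ F)
    (hd' : Differentiable ℝ (fderiv ℝ F))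
    (hlip : ∀ x y, ‖fderiv ℝ (fderiv ℝ F) x - fderiv ℝ (fderiv ℝ F) y‖ ≤ C * ‖x - y‖)
    (hC : 0 ≤ C) (x y v : E) :
    ‖taylorRemainder F x v - taylorRemainder F y v‖ ≤ C * ‖v‖ ^ 2 * ‖x - y‖ := by
  have hsymm (z : E) : (fderiv ℝ (fderiv ℝ F) z).flip v = fderiv ℝ (fderiv ℝ F) z v := by
    ext w
    exact second_derivative_symmetric (fun y => (hd y).hasFDerivAt) (hd' z).hasFDerivAt w v
  have hder (z : E) : HasFDerivAt (fun z => taylorRemainder F z v)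
      (taylorRemainder (fderiv ℝ F) z v) z := by
    rw [taylorRemainder, ← hsymm]
    refine (hasFDerivAt_comp_add_right_sub hd v z).sub ?_
    simpa using (hd' z).hasFDerivAt.clm_apply (hasFDerivAt_const v z)
  refine convex_univ.norm_image_sub_le_of_norm_hasFDerivWithin_le
    (fun z _ => (hder z).hasFDerivWithinAt) (fun z _ => ?_) (mem_univ y) (mem_univ x)
  simpa [sq, mul_assoc] using norm_taylorRemainder_sub_increment_le hd' hlip hC z v 0

theorem IsBoundedContDiff.eventually_norm_taylorRemainder_sub_le (hF : IsBoundedContDiff 3 F) :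
    ∀ᶠ N in atTop, ∀ x y v w, ‖taylorRemainder F x v - taylorRemainder F y w‖
      ≤ N * (‖v‖ ^ 2 * ‖x - y‖ + (‖v‖ + ‖w‖) * ‖v - w‖) := by
  filter_upwards [eventually_ge_atTop 0, (hF.fderiv.of_le one_le_two).eventually_lipschitz,
    hF.fderiv.fderiv.eventually_lipschitz] with N hN hlip hlip' x y v w
  calc ‖taylorRemainder F x v - taylorRemainder F y w‖
      ≤ ‖taylorRemainder F x v - taylorRemainder F y v‖
        + ‖taylorRemainder F y v - taylorRemainder F y w‖ := norm_sub_le_norm_sub_add_norm_sub ..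
    _ ≤ N * ‖v‖ ^ 2 * ‖x - y‖ + N * (‖v‖ + ‖w‖) * ‖v - w‖ := add_le_add
        (norm_taylorRemainder_sub_point_le hF.differentiable hF.fderiv.differentiable hlip' hN
          x y v)
        (norm_taylorRemainder_sub_increment_le hF.differentiable hlip hN y v w)
    _ = _ := by ring

end BoundedDerivatives

section DavieScheme

variable {E V W : Type*} [NormedAddCommGroup E] [NormedSpace ℝ E] [NormedAddCommGroup V]
  [NormedSpace ℝ V] [NormedAddCommGroup W] [NormedSpace ℝ W] {T α N : ℝ} {f : E → V →L[ℝ] E}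
  {X : ℝ → V} {XX : ℝ → ℝ → W}

/-- `(X, XX)` is an `α`-Hölder rough path over `[0, T]`. The second level takes its values in an
arbitrary space `W`, and `tensor : V × V → W` plays the role of the tensor product in Chen's
identity. -/
structure IsRoughPath (tensor : V →ₗ[ℝ] V →ₗ[ℝ] W) (α T : ℝ) (X : ℝ → V) (XX : ℝ → ℝ → W) :
    Prop where
  bddAbove_path : BddAbove (holderRatios α T X)
  bddAbove_area : BddAbove (holderRatios2 α T XX)
  chen : ∀ ⦃s u t : ℝ⦄, 0 ≤ s → s ≤ u → u ≤ t → t ≤ T →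
    XX s t - XX s u - XX u t = tensor (X u - X s) (X t - X u)

theorem IsRoughPath.area_self {tensor : V →ₗ[ℝ] V →ₗ[ℝ] W} (hX : IsRoughPath tensor α T X XX)
    {s : ℝ} (hs : s ∈ Icc 0 T) : XX s s = 0 := by
  simpa using hX.chen hs.1 le_rfl le_rfl hs.2

/-- The coefficient `Df(x)f(x)` of the second-order term of Davie's scheme. The bilinear map
`(v, w) ↦ Df(x)(f(x)v)w` acts on second levels through `contract`, which linearizes it. -/
def davieCoeff (contract : (V →L[ℝ] V →L[ℝ] E) →L[ℝ] W →L[ℝ] E) (f : E → V →L[ℝ] E) (x : E) :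
    W →L[ℝ] E :=
  contract ((fderiv ℝ f x).comp (f x))

/-- The displacement `f(x)X_{s,t} + Df(x)f(x)𝕏_{s,t}` of Davie's second-order scheme. -/
def davieStep (contract : (V →L[ℝ] V →L[ℝ] E) →L[ℝ] W →L[ℝ] E) (f : E → V →L[ℝ] E) (X : ℝ → V)
    (XX : ℝ → ℝ → W) (s t : ℝ) (x : E) : E :=
  f x (X t - X s) + davieCoeff contract f x (XX s t)

variable {contract : (V →L[ℝ] V →L[ℝ] E) →L[ℝ] W →L[ℝ] E}

theorem IsBoundedContDiff.davieCoeff {n : ℕ} (hf : IsBoundedContDiff (n + 1) f) :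
    IsBoundedContDiff n (davieCoeff contract f) :=
  (hf.fderiv.clm_comp (hf.of_le n.le_succ)).continuousLinearMap_comp contract

/-- All the bounds on the vector field and on the rough path that enter the estimates on Davie's
scheme, with one common constant `N`. -/
structure DavieBounds (contract : (V →L[ℝ] V →L[ℝ] E) →L[ℝ] W →L[ℝ] E) (α T N : ℝ)
    (f : E → V →L[ℝ] E) (X : ℝ → V) (XX : ℝ → ℝ → W) : Prop where
  field : BoundedDifferences N f
  coeff : BoundedDifferences N (davieCoeff contract f)
  fderiv_comp_coeff :
    BoundedDifferences N fun x => (fderiv ℝ f x).comp (davieCoeff contract f x)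
  taylorRemainder_le : ∀ x y v w, ‖taylorRemainder f x v - taylorRemainder f y w‖
    ≤ N * (‖v‖ ^ 2 * ‖x - y‖ + (‖v‖ + ‖w‖) * ‖v - w‖)
  path : HolderBound T α N fun s t => X t - X s
  area : HolderBound T (2 * α) N XX
  chen : ∀ ⦃s u t : ℝ⦄, 0 ≤ s → s ≤ u → u ≤ t → t ≤ T → ∀ B,
    contract B (XX s t - XX s u - XX u t) = B (X u - X s) (X t - X u)

theorem IsRoughPath.exists_davieBounds {tensor : V →ₗ[ℝ] V →ₗ[ℝ] W}
    (hX : IsRoughPath tensor α T X XX) (hcontract : ∀ B v w, contract B (tensor v w) = B v w)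
    (hf : IsBoundedContDiff 3 f) : ∃ N, DavieBounds contract α T N f X XX := by
  have hcoeff : IsBoundedContDiff 2 (davieCoeff contract f) := hf.davieCoeff
  have hcomp : IsBoundedContDiff 2 fun x => (fderiv ℝ f x).comp (davieCoeff contract f x) :=
    hf.fderiv.clm_comp hcoeff
  obtain ⟨N, hN⟩ := ((hf.of_le (by norm_num)).eventually_boundedDifferences.and <|
    hcoeff.eventually_boundedDifferences.and <| hcomp.eventually_boundedDifferences.and <|
    hf.eventually_norm_taylorRemainder_sub_le.and <|
    (HolderBound.eventually_of_bddAbove_holderRatios hX.bddAbove_path).and <|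
    HolderBound.eventually_of_bddAbove_holderRatios2 hX.bddAbove_area
      fun _ => hX.area_self).exists
  obtain ⟨hfield, hcoeff, hcomp, htaylor, hpath, harea⟩ := hN
  exact ⟨N, hfield, hcoeff, hcomp, htaylor, hpath, harea, fun s u t hs hsu hut htT B => by
    rw [hX.chen hs hsu hut htT, hcontract]⟩

namespace DavieBounds

theorem nonneg (h : DavieBounds contract α T N f X XX) : 0 ≤ N := h.path.nonneg

theorem norm_path_le (h : DavieBounds contract α T N f X XX) (hα : 0 ≤ α) {s u v t : ℝ}
    (hs : 0 ≤ s) (hsu : s ≤ u) (huv : u ≤ v) (hvt : v ≤ t) (htT : t ≤ T) :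
    ‖X v - X u‖ ≤ N * (t - s) ^ α := by
  have hN := h.nonneg
  have : 0 ≤ v - u := sub_nonneg.2 huv
  exact (h.path.norm_le (hs.trans hsu) huv (hvt.trans htT)).trans (by gcongr)

theorem norm_area_le (h : DavieBounds contract α T N f X XX) (hα : 0 ≤ α) {s u v t : ℝ}
    (hs : 0 ≤ s) (hsu : s ≤ u) (huv : u ≤ v) (hvt : v ≤ t) (htT : t ≤ T) :
    ‖XX u v‖ ≤ N * ((t - s) ^ α) ^ 2 := by
  have hN := h.nonneg
  have : 0 ≤ v - u := sub_nonneg.2 huv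
  rw [← Real.rpow_mul_natCast (by linarith), mul_comm α, Nat.cast_two]
  exact (h.area.norm_le (hs.trans hsu) huv (hvt.trans htT)).trans (by gcongr)

theorem norm_step_le (h : DavieBounds contract α T N f X XX) (hα : 0 ≤ α) {s u t m : ℝ}
    (hs : 0 ≤ s) (hsu : s ≤ u) (hut : u ≤ t) (htT : t ≤ T) {φ : V →L[ℝ] E} {ψ : W →L[ℝ] E}
    (hφ : ‖φ‖ ≤ N * m) (hψ : ‖ψ‖ ≤ N * m) :
    ‖φ (X u - X s) + ψ (XX s u)‖ ≤ N ^ 2 * (1 + T ^ α) * (t - s) ^ α * m := by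
  have hts : 0 ≤ t - s := by linarith
  have hm : 0 ≤ N * m := (norm_nonneg φ).trans hφ
  calc ‖φ (X u - X s) + ψ (XX s u)‖
      ≤ N * m * (N * (t - s) ^ α) + N * m * (N * ((t - s) ^ α) ^ 2) := norm_add_le_of_le
        (φ.le_of_opNorm_le_of_le hφ (h.norm_path_le hα hs le_rfl hsu hut htT))
        (ψ.le_of_opNorm_le_of_le hψ (h.norm_area_le hα hs le_rfl hsu hut htT))
    _ = (1 + (t - s) ^ α) * (N * m * (N * (t - s) ^ α)) := by ring
    _ ≤ (1 + T ^ α) * (N * m * (N * (t - s) ^ α)) := by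
        have hN := h.nonneg
        gcongr
        linarith
    _ = _ := by ring

theorem flowDefect_davieStep (h : DavieBounds contract α T N f X XX) {s u t : ℝ} (hs : 0 ≤ s)
    (hsu : s ≤ u) (hut : u ≤ t) (htT : t ≤ T) (x : E) :
    flowDefect (davieStep contract f X XX) s u t x =
      taylorRemainder f x (davieStep contract f X XX s u x) (X t - X u)
        + (fderiv ℝ f x).comp (davieCoeff contract f x) (XX s u) (X t - X u)
        + (davieCoeff contract f (x + davieStep contract f X XX s u x) - davieCoeff contract f x)
          (XX u t) := by
  have hchen : davieCoeff contract f x (XX s t) = davieCoeff contract f x (XX s u)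
      + davieCoeff contract f x (XX u t) + fderiv ℝ f x (f x (X u - X s)) (X t - X u) := by
    have hB := h.chen hs hsu hut htT ((fderiv ℝ f x).comp (f x))
    rw [← davieCoeff, map_sub, map_sub, ContinuousLinearMap.comp_apply] at hB
    rw [← hB]
    abel
  have hv : fderiv ℝ f x (davieStep contract f X XX s u x) =
      fderiv ℝ f x (f x (X u - X s)) + fderiv ℝ f x (davieCoeff contract f x (XX s u)) := by
    rw [davieStep, map_add]
  set v := davieStep contract f X XX s u x with hvdef
  rw [flowDefect, ← hvdef, taylorRemainder, hv]
  simp only [davieStep, sub_apply, ContinuousLinearMap.comp_apply, add_apply, hvdef, hchen, map_sub]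
  abel

theorem norm_defect_le (h : DavieBounds contract α T N f X XX) (hα : 0 ≤ α) {s u t p q r m : ℝ}
    (hs : 0 ≤ s) (hsu : s ≤ u) (hut : u ≤ t) (htT : t ≤ T) {φ : V →L[ℝ] E}
    {β : W →L[ℝ] V →L[ℝ] E} {ψ : W →L[ℝ] E} (hφ : ‖φ‖ ≤ p * ((t - s) ^ α) ^ 2 * m)
    (hβ : ‖β‖ ≤ q * m) (hψ : ‖ψ‖ ≤ r * (t - s) ^ α * m) :
    ‖φ (X t - X u) + β (XX s u) (X t - X u) + ψ (XX u t)‖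
      ≤ (N * p + N ^ 2 * q + N * r) * (t - s) ^ (3 * α) * m := by
  have hX := h.norm_path_le hα hs hsu hut le_rfl htT
  have hsu' := h.norm_area_le hα hs le_rfl hsu hut htT
  have hut' := h.norm_area_le hα hs hsu hut le_rfl htT
  refine (norm_add_le_of_le (norm_add_le_of_le (φ.le_of_opNorm_le_of_le hφ hX)
    ((β _).le_of_opNorm_le_of_le (β.le_of_opNorm_le_of_le hβ hsu') hX))
    (ψ.le_of_opNorm_le_of_le hψ hut')).trans_eq ?_
  rw [mul_comm 3, show (t - s) ^ (α * 3) = ((t - s) ^ α) ^ 3 from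
    Real.rpow_mul_natCast (by linarith) α 3]
  ring

theorem norm_davieStep_le (h : DavieBounds contract α T N f X XX) (hα : 0 ≤ α) {s u t : ℝ}
    (hs : 0 ≤ s) (hsu : s ≤ u) (hut : u ≤ t) (htT : t ≤ T) (x : E) :
    ‖davieStep contract f X XX s u x‖ ≤ N ^ 2 * (1 + T ^ α) * (t - s) ^ α := by
  simpa [davieStep] using h.norm_step_le hα (m := 1) hs hsu hut htT
    (by simpa using h.field.norm_le x) (by simpa using h.coeff.norm_le x)

theorem norm_davieStep_sub_le (h : DavieBounds contract α T N f X XX) (hα : 0 ≤ α) {s u t : ℝ}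
    (hs : 0 ≤ s) (hsu : s ≤ u) (hut : u ≤ t) (htT : t ≤ T) (x y : E) :
    ‖davieStep contract f X XX s u x - davieStep contract f X XX s u y‖
      ≤ N ^ 2 * (1 + T ^ α) * (t - s) ^ α * ‖x - y‖ := by
  simpa [davieStep, add_sub_add_comm] using
    h.norm_step_le hα hs hsu hut htT (h.field.lipschitz x y) (h.coeff.lipschitz x y)

theorem norm_davieStep_secondDifference_le (h : DavieBounds contract α T N f X XX) (hα : 0 ≤ α)
    {s t : ℝ} (hs : 0 ≤ s) (hst : s ≤ t) (htT : t ≤ T) (x y v : E) :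
    ‖(davieStep contract f X XX s t (x + v) - davieStep contract f X XX s t x)
        - (davieStep contract f X XX s t (y + v) - davieStep contract f X XX s t y)‖
      ≤ N ^ 2 * (1 + T ^ α) * (t - s) ^ α * (‖v‖ * ‖x - y‖) := by
  simpa [davieStep, add_sub_add_comm] using h.norm_step_le hα hs hst le_rfl htT
    ((h.field.secondDifference_le x y v).trans_eq (mul_assoc ..))
    ((h.coeff.secondDifference_le x y v).trans_eq (mul_assoc ..))

theorem norm_flowDefect_le (h : DavieBounds contract α T N f X XX) (hα : 0 ≤ α) {s u t c : ℝ}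
    (hs : 0 ≤ s) (hsu : s ≤ u) (hut : u ≤ t) (htT : t ≤ T) {x : E}
    (hx : ‖davieStep contract f X XX s u x‖ ≤ c * (t - s) ^ α) :
    ‖flowDefect (davieStep contract f X XX) s u t x‖
      ≤ (N ^ 2 * c ^ 2 + N ^ 3 + N ^ 2 * c) * (t - s) ^ (3 * α) := by
  have hN := h.nonneg
  have hρ := h.taylorRemainder_le x x (davieStep contract f X XX s u x) 0
  have hG := h.coeff.lipschitz (x + davieStep contract f X XX s u x) x
  simp only [taylorRemainder_zero, sub_zero, sub_self, norm_zero, mul_zero, add_zero, zero_add,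
    add_sub_cancel_left, ← sq] at hρ hG
  rw [h.flowDefect_davieStep hs hsu hut htT x]
  refine (h.norm_defect_le hα (p := N * c ^ 2) (q := N) (r := N * c) (m := 1) hs hsu hut htT ?_ ?_
    ?_).trans_eq (by ring)
  · calc _ ≤ N * ‖davieStep contract f X XX s u x‖ ^ 2 := hρ
      _ ≤ N * (c * (t - s) ^ α) ^ 2 := by gcongr
      _ = _ := by ring
  · simpa using h.fderiv_comp_coeff.norm_le x
  · calc _ ≤ N * ‖davieStep contract f X XX s u x‖ := hG
      _ ≤ N * (c * (t - s) ^ α) := by gcongr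
      _ = _ := by ring

theorem norm_flowDefect_sub_le (h : DavieBounds contract α T N f X XX) (hα : 0 ≤ α) {s u t c : ℝ}
    (hs : 0 ≤ s) (hsu : s ≤ u) (hut : u ≤ t) (htT : t ≤ T) {x y : E}
    (hx : ‖davieStep contract f X XX s u x‖ ≤ c * (t - s) ^ α)
    (hy : ‖davieStep contract f X XX s u y‖ ≤ c * (t - s) ^ α)
    (hxy : ‖davieStep contract f X XX s u x - davieStep contract f X XX s u y‖
      ≤ c * (t - s) ^ α * ‖x - y‖) :
    ‖flowDefect (davieStep contract f X XX) s u t x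
        - flowDefect (davieStep contract f X XX) s u t y‖ ≤
      (3 * N ^ 2 * c ^ 2 + N ^ 3 + 2 * N ^ 2 * c) * (t - s) ^ (3 * α) * ‖x - y‖ := by
  have hN := h.nonneg
  rw [h.flowDefect_davieStep hs hsu hut htT, h.flowDefect_davieStep hs hsu hut htT,
    add_sub_add_comm, add_sub_add_comm, ← sub_apply, ← sub_apply, ← sub_apply, ← sub_apply]
  set v := davieStep contract f X XX s u x
  set w := davieStep contract f X XX s u y
  have hx0 : 0 ≤ c * (t - s) ^ α := (norm_nonneg v).trans hx
  refine (h.norm_defect_le hα (p := 3 * N * c ^ 2) (q := N) (r := 2 * N * c) hs hsu hut htT ?_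
    (h.fderiv_comp_coeff.lipschitz x y) ?_).trans_eq (by ring)
  · calc _ ≤ N * (‖v‖ ^ 2 * ‖x - y‖ + (‖v‖ + ‖w‖) * ‖v - w‖) := h.taylorRemainder_le x y v w
      _ ≤ N * ((c * (t - s) ^ α) ^ 2 * ‖x - y‖
          + (c * (t - s) ^ α + c * (t - s) ^ α) * (c * (t - s) ^ α * ‖x - y‖)) := by gcongr
      _ = _ := by ring
  · calc _ ≤ N * (‖v‖ * ‖x - y‖ + ‖v - w‖) := h.coeff.norm_sub_sub_sub_le x y v w
      _ ≤ N * (c * (t - s) ^ α * ‖x - y‖ + c * (t - s) ^ α * ‖x - y‖) := by gcongr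
      _ = _ := by ring

theorem exists_isStableAlmostFlow (h : DavieBounds contract α T N f X XX) (hα : 1 / 3 < α)
    (hT : 0 ≤ T) : ∃ C, IsStableAlmostFlow T α (3 * α) C (davieStep contract f X XX) := by
  have hα0 : 0 ≤ α := by linarith
  have := h.nonneg
  set c := N ^ 2 * (1 + T ^ α)
  have hc : 0 ≤ c := by positivity
  obtain ⟨C, hcC, hcTC, hdefC, hlipC⟩ : ∃ C, c ≤ C ∧ c * T ^ α ≤ C ∧
      N ^ 2 * c ^ 2 + N ^ 3 + N ^ 2 * c ≤ C ∧ 3 * N ^ 2 * c ^ 2 + N ^ 3 + 2 * N ^ 2 * c ≤ C :=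
    ((eventually_ge_atTop _).and <| (eventually_ge_atTop _).and <| (eventually_ge_atTop _).and <|
      eventually_ge_atTop _).exists
  have hpow {s t : ℝ} (hst : s ≤ t) (β : ℝ) : 0 ≤ (t - s) ^ β :=
    Real.rpow_nonneg (sub_nonneg.2 hst) β
  refine ⟨C, ⟨hc.trans hcC, by linarith, by linarith, ?_, ?_, ?_⟩, ?_, ?_⟩
  · intro s t hs hst htT x
    exact (h.norm_davieStep_le hα0 hs hst le_rfl htT x).trans
      (mul_le_mul_of_nonneg_right hcC (hpow hst α))
  · intro s t hs hst htT x y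
    have := hpow hst α
    exact (h.norm_davieStep_sub_le hα0 hs hst le_rfl htT x y).trans (by gcongr)
  · intro s u t hs hsu hut htT x
    exact (h.norm_flowDefect_le hα0 hs hsu hut htT (h.norm_davieStep_le hα0 hs hsu hut htT x)).trans
      (mul_le_mul_of_nonneg_right hdefC (hpow (hsu.trans hut) _))
  · intro s t hs hst htT x y v
    have : 0 ≤ t - s := sub_nonneg.2 hst
    rw [mul_assoc C]
    refine (h.norm_davieStep_secondDifference_le hα0 hs hst htT x y v).trans ?_
    gcongr
    refine le_trans ?_ hcTC
    gcongr
    linarith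
  · intro s u t hs hsu hut htT x y
    have := hpow (hsu.trans hut) (3 * α)
    exact (h.norm_flowDefect_sub_le hα0 hs hsu hut htT (h.norm_davieStep_le hα0 hs hsu hut htT x)
      (h.norm_davieStep_le hα0 hs hsu hut htT y)
      (h.norm_davieStep_sub_le hα0 hs hsu hut htT x y)).trans (by gcongr)

end DavieBounds

end DavieScheme

section Solutions

variable {E V W : Type*} [NormedAddCommGroup E] [NormedSpace ℝ E] [NormedAddCommGroup V]
  [NormedSpace ℝ V] [NormedAddCommGroup W] [NormedSpace ℝ W] {T α N K : ℝ} {f : E → V →L[ℝ] E}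
  {X : ℝ → V} {XX : ℝ → ℝ → W} {contract : (V →L[ℝ] V →L[ℝ] E) →L[ℝ] W →L[ℝ] E} {ξ : E}
  {Y : ℝ → E}

/-- `Y` solves `dY = f(Y) d𝐗`, `Y 0 = ξ` over `[0, T]`, for a driving path with values in an
arbitrary normed space; the summands of the compensated Riemann sums are the displacements of
Davie's scheme along `Y`. -/
structure IsRDESolution (contract : (V →L[ℝ] V →L[ℝ] E) →L[ℝ] W →L[ℝ] E) (α T : ℝ) (X : ℝ → V)
    (XX : ℝ → ℝ → W) (f : E → V →L[ℝ] E) (ξ : E) (Y : ℝ → E) : Prop where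
  continuousOn : ContinuousOn Y (Icc 0 T)
  bddAbove_derivative : BddAbove (holderRatios α T fun t => f (Y t))
  bddAbove_remainder : BddAbove (holderRatios2 α T fun s t => Y t - Y s - f (Y s) (X t - X s))
  riemannSumsConverge :
    RiemannSumsConverge (fun s t => davieStep contract f X XX s t (Y s)) T fun t => Y t - ξ

theorem localError_davieStep (s t : ℝ) : localError (davieStep contract f X XX) Y s t =
    Y t - Y s - f (Y s) (X t - X s) - davieCoeff contract f (Y s) (XX s t) := by
  rw [localError, davieStep, sub_add_eq_sub_sub]

namespace DavieBounds

theorem holderBound_davieCoeff (h : DavieBounds contract α T N f X XX) (hα : 0 ≤ α) :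
    HolderBound T (2 * α) (N * N) fun s t => davieCoeff contract f (Y s) (XX s t) := by
  simpa only [zero_add] using
    (HolderBound.of_norm_le h.nonneg fun s _ => h.coeff.norm_le (Y s)).clm_apply h.area le_rfl
      (by linarith)

theorem exists_holderBound_remainder (h : DavieBounds contract α T N f X XX) (hα : 0 ≤ α)
    (hT : 0 ≤ T) (hY : HolderBound T (3 * α) K (localError (davieStep contract f X XX) Y)) :
    ∃ M, HolderBound T (2 * α) M fun s t => Y t - Y s - f (Y s) (X t - X s) := by
  have hadd := (hY.mono_exponent hT (by linarith : 0 ≤ 2 * α) (by linarith)).add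
    (h.holderBound_davieCoeff (Y := Y) hα)
  simp only [localError_davieStep, sub_add_cancel] at hadd
  exact ⟨_, hadd⟩

theorem exists_holderBound_path (h : DavieBounds contract α T N f X XX) (hα : 0 ≤ α) (hT : 0 ≤ T)
    (hR : HolderBound T (2 * α) K fun s t => Y t - Y s - f (Y s) (X t - X s)) :
    ∃ M, HolderBound T α M fun s t => Y t - Y s := by
  have hfX := (HolderBound.of_norm_le h.nonneg fun s _ => h.field.norm_le (Y s)).clm_apply
    h.path le_rfl hα
  rw [zero_add] at hfX
  have hadd := (hR.mono_exponent hT hα (by linarith)).add hfX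
  simp only [sub_add_cancel] at hadd
  exact ⟨_, hadd⟩

theorem isRDESolution (h : DavieBounds contract α T N f X XX) (hα : 1 / 3 < α) (hT : 0 ≤ T)
    (hY0 : Y 0 = ξ) (hY : HolderBound T (3 * α) K (localError (davieStep contract f X XX) Y)) :
    IsRDESolution contract α T X XX f ξ Y := by
  have hα0 : 0 < α := by linarith
  obtain ⟨M, hR⟩ := h.exists_holderBound_remainder hα0.le hT hY
  obtain ⟨L, hYα⟩ := h.exists_holderBound_path hα0.le hT hR
  have hfY := hYα.lipschitz_comp h.nonneg h.field.lipschitz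
  have hR' : HolderBound T (2 * α) (N * L * N + M)
      fun s t => Y s - Y t - f (Y t) (X s - X t) := by
    have hsub := (hfY.clm_apply h.path hα0.le hα0.le)
    rw [← two_mul] at hsub
    convert hsub.sub hR using 3 with s t
    rw [← neg_sub (X t), map_neg, sub_apply]
    abel
  refine ⟨hYα.continuousOn hα0, hfY.bddAbove_holderRatios, hR.bddAbove_holderRatios2 hR', ?_⟩
  rw [← hY0]
  exact HolderBound.riemannSumsConverge hY (by linarith)

theorem exists_holderBound_localError (h : DavieBounds contract α T N f X XX) (hα : 1 / 3 < α)
    {C : ℝ} (hg : IsAlmostFlow T α (3 * α) C (davieStep contract f X XX))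
    (hY : IsRDESolution contract α T X XX f ξ Y) :
    ∃ K, HolderBound T (3 * α) K (localError (davieStep contract f X XX) Y) := by
  obtain ⟨M, hR⟩ := (HolderBound.eventually_of_bddAbove_holderRatios2 hY.bddAbove_remainder
    (by simp)).exists
  have herr := hR.sub (h.holderBound_davieCoeff (Y := Y) (by linarith))
  simp only [← localError_davieStep] at herr
  have h3α : 3 * α = α + 2 * α := by ring
  have hadd := IsAlmostFlow.isAlmostAdditive_of_localError (h3α ▸ hg) herr (by linarith)
  obtain ⟨K, hK⟩ := hY.riemannSumsConverge.exists_holderBound hadd (by linarith)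
  simp only [sub_sub_sub_cancel_right] at hK
  exact ⟨K, h3α ▸ hK⟩

end DavieBounds

theorem IsRDESolution.apply_zero (hY : IsRDESolution contract α T X XX f ξ Y) (hT : 0 ≤ T) :
    Y 0 = ξ :=
  sub_eq_zero.1 (hY.riemannSumsConverge.apply_zero hT)

end Solutions

theorem rde_existence_uniqueness_general {E V W : Type*} [NormedAddCommGroup E] [NormedSpace ℝ E]
    [ProperSpace E] [NormedAddCommGroup V] [NormedSpace ℝ V] [NormedAddCommGroup W]
    [NormedSpace ℝ W] {tensor : V →ₗ[ℝ] V →ₗ[ℝ] W}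
    {contract : (V →L[ℝ] V →L[ℝ] E) →L[ℝ] W →L[ℝ] E}
    (hcontract : ∀ B v w, contract B (tensor v w) = B v w) {α T : ℝ} (hα : 1 / 3 < α) (hT : 0 ≤ T)
    (ξ : E) {f : E → V →L[ℝ] E} (hf : IsBoundedContDiff 3 f) {X : ℝ → V} {XX : ℝ → ℝ → W}
    (hX : IsRoughPath tensor α T X XX) :
    ∃ Y, IsRDESolution contract α T X XX f ξ Y ∧
      ∀ Z, IsRDESolution contract α T X XX f ξ Z → ∀ t ∈ Icc 0 T, Z t = Y t := by
  obtain ⟨N, h⟩ := hX.exists_davieBounds hcontract hf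
  obtain ⟨C, hg⟩ := h.exists_isStableAlmostFlow hα hT
  obtain ⟨Y, hY0, K, hY⟩ := hg.exists_path hT ξ
  refine ⟨Y, h.isRDESolution hα hT hY0 hY, fun Z hZ t ht => ?_⟩
  obtain ⟨K', hZ'⟩ := h.exists_holderBound_localError hα hg.toIsAlmostFlow hZ
  exact hg.eq_of_holderBound hY hZ' ((hZ.apply_zero hT).trans hY0.symm) ht

section Euclidean

variable {d e : ℕ}

/-- The tensor product `v ⊗ w = (vⁱ wʲ)` on `ℝ^d`. -/
def eucTensor (d : ℕ) : Euc d →ₗ[ℝ] Euc d →ₗ[ℝ] EuclideanSpace ℝ (Fin d × Fin d) :=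
  LinearMap.mk₂ ℝ (fun v w => WithLp.toLp 2 fun p => v p.1 * w p.2)
    (fun _ _ _ => by ext; simp [add_mul]) (fun _ _ _ => by ext; simp [mul_assoc])
    (fun _ _ _ => by ext; simp [mul_add]) (fun _ _ _ => by ext; simp [mul_left_comm])

/-- `contractTensor` as a continuous bilinear map. -/
def contractTensorL (d e : ℕ) : (Euc d →L[ℝ] Euc d →L[ℝ] Euc e) →L[ℝ]
    EuclideanSpace ℝ (Fin d × Fin d) →L[ℝ] Euc e :=
  LinearMap.toContinuousBilinearMap (𝕜 := ℝ) <| LinearMap.mk₂ ℝ contractTensor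
    (fun _ _ _ => by simp [contractTensor, Finset.sum_add_distrib])
    (fun c _ _ => by simp [contractTensor, Finset.smul_sum, smul_comm c])
    (fun _ _ _ => by simp [contractTensor, Finset.sum_add_distrib, add_smul])
    (fun _ _ _ => by simp [contractTensor, Finset.smul_sum, mul_smul])

theorem contractTensorL_eucTensor (B : Euc d →L[ℝ] Euc d →L[ℝ] Euc e) (v w : Euc d) :
    contractTensorL d e B (eucTensor d v w) = B v w := by
  have hsum (x : Euc d) : ∑ i, x i • EuclideanSpace.single i (1 : ℝ) = x := by
    simpa using (EuclideanSpace.basisFun (Fin d) ℝ).sum_repr x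
  calc contractTensorL d e B (eucTensor d v w)
      = ∑ i, ∑ j, (v i * w j) • B (EuclideanSpace.single i 1) (EuclideanSpace.single j 1) := rfl
    _ = B (∑ i, v i • EuclideanSpace.single i 1) (∑ j, w j • EuclideanSpace.single j 1) := by
      simp only [map_sum, map_smul, sum_apply, smul_apply, Finset.smul_sum, mul_smul]
      rw [Finset.sum_comm]
      exact Finset.sum_congr rfl fun i _ => Finset.sum_congr rfl fun j _ => smul_comm ..
    _ = B v w := by rw [hsum, hsum]

theorem isRoughPath_eucTensor {α T : ℝ} {X : ℝ → Euc d}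
    {XX : ℝ → ℝ → EuclideanSpace ℝ (Fin d × Fin d)}
    (hChen : ∀ s u t : ℝ, 0 ≤ s → s ≤ u → u ≤ t → t ≤ T → ∀ i j : Fin d,
      XX s t (i, j) - XX s u (i, j) - XX u t (i, j) = (X u i - X s i) * (X t j - X u j))
    (hX : BddAbove (holderRatios α T X)) (hXX : BddAbove (holderRatios2 α T XX)) :
    IsRoughPath (eucTensor d) α T X XX :=
  ⟨hX, hXX, fun s u t hs hsu hut htT => by ext ⟨i, j⟩; exact hChen s u t hs hsu hut htT i j⟩

theorem solvesRDE_iff {α T : ℝ} {X : ℝ → Euc d} {XX : ℝ → ℝ → EuclideanSpace ℝ (Fin d × Fin d)}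
    {f : Euc e → Euc d →L[ℝ] Euc e} {ξ : Euc e} {Y : ℝ → Euc e} :
    SolvesRDE α T X XX f ξ Y ↔ IsRDESolution (contractTensorL d e) α T X XX f ξ Y :=
  ⟨fun ⟨hcont, hder, hrem, hsum⟩ => ⟨hcont, hder, hrem, riemannSumsConverge_iff.2 hsum⟩,
    fun ⟨hcont, hder, hrem, hsum⟩ => ⟨hcont, hder, hrem, riemannSumsConverge_iff.1 hsum⟩⟩

end Euclidean

/-- Existence and uniqueness for RDEs: for `α ∈ (1/3, 1/2]`, `T > 0`,
`ξ ∈ ℝ^e`, `f ∈ C³_b(ℝ^e, L(ℝ^d, ℝ^e))` and an `α`-Hölder rough path `𝐗 = (X, 𝕏)` on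
`[0,T]` with values in `ℝ^d`, there is a solution `Y` of `Y_t = ξ + ∫_0^t f(Y_s) d𝐗_s`,
unique on `[0,T]`. -/
theorem rde_existence_uniqueness (α T : ℝ) (hα1 : 1/3 < α) (hα2 : α ≤ 1/2) (hT : 0 < T)
    (d e : ℕ) (ξ : Euc e) (f : Euc e → (Euc d →L[ℝ] Euc e))
    (hf_smooth : ContDiff ℝ 3 f)
    (hf_bdd : ∀ i : ℕ, i ≤ 3 → ∃ C : ℝ, ∀ x, ‖iteratedFDeriv ℝ i f x‖ ≤ C)
    (X : ℝ → Euc d) (XX : ℝ → ℝ → EuclideanSpace ℝ (Fin d × Fin d))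
    (hXcont : ContinuousOn X (Set.Icc 0 T))
    (hChen : ∀ s u t : ℝ, 0 ≤ s → s ≤ u → u ≤ t → t ≤ T → ∀ i j : Fin d,
      XX s t (i, j) - XX s u (i, j) - XX u t (i, j) = (X u i - X s i) * (X t j - X u j))
    (hX : BddAbove (holderRatios α T X))
    (hXX : BddAbove (holderRatios2 α T XX)) :
    ∃ Y : ℝ → Euc e, SolvesRDE α T X XX f ξ Y ∧
      ∀ Z : ℝ → Euc e, SolvesRDE α T X XX f ξ Z → ∀ t ∈ Set.Icc (0 : ℝ) T, Z t = Y t := by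
  simpa only [solvesRDE_iff] using rde_existence_uniqueness_general contractTensorL_eucTensor hα1
    hT.le ξ ⟨hf_smooth, hf_bdd⟩ (isRoughPath_eucTensor hChen hX hXX)

end
end

section
/- Let s < t be dyadic rationals in [0,1] and let m ≥ 0 be the integer with 2^{−m−1} < t − s ≤ 2^{−m}. Then there exists a partition s = τ₀ < τ₁ < … < τ_N = t of [s,t] such that every interval [τ_i, τ_{i+1}] is a dyadic interval of the form [j·2^{−k}, (j+1)·2^{−k}] for some integers k ≥ m+1 and 0 ≤ j < 2^k, and moreover, for each fixed k ≥ m+1, at most two of the intervals [τ_i, τ_{i+1}] have length 2^{−k}. -/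
/-- `x` is a dyadic rational in `[0,1]`, i.e. `x = i·2⁻ⁿ` for some `n` and `0 ≤ i ≤ 2ⁿ`. -/
def IsDyadic (x : ℝ) : Prop :=
  ∃ n i : ℕ, i ≤ 2 ^ n ∧ x = i * (1 / 2 : ℝ) ^ n

/-!
Put `s` and `t` on a common grid of mesh `2⁻ⁿ` with `n > m` and induct on `n`. An endpoint that
does not lie on the coarser grid of mesh `2⁻⁽ⁿ⁻¹⁾` is moved inwards onto it by cutting off one
interval of length `2⁻ⁿ`, which costs at most one interval of that length at each end. The two new
endpoints lie on the coarser grid and are still at most `2⁻ᵐ` apart. On the grid of mesh `2⁻⁽ᵐ⁺¹⁾`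
this bound leaves at most two cells.
-/

open Filter

/-- `[x, y]` is a dyadic interval of level `k` contained in `[0, 1]`. -/
def IsDyadicInterval (k : ℕ) (x y : ℝ) : Prop :=
  ∃ j : ℕ, j < 2 ^ k ∧ x = j * (1 / 2 : ℝ) ^ k ∧ y = (j + 1) * (1 / 2 : ℝ) ^ k

/-- A partition of `[s, t]` into consecutive dyadic intervals, indexed by the multiset `K` of their
levels. Keeping only the levels makes concatenation correspond to addition of multisets, and the
multiplicity of `k` in `K` is the number of intervals of length `2⁻ᵏ`. -/
inductive DyadicChain : ℝ → ℝ → Multiset ℕ → Prop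
  | nil (s : ℝ) : DyadicChain s s 0
  | cons {k : ℕ} {s u t : ℝ} {K : Multiset ℕ} (hsu : IsDyadicInterval k s u)
      (hut : DyadicChain u t K) : DyadicChain s t (k ::ₘ K)

namespace IsDyadicInterval

variable {k : ℕ} {x y : ℝ}

lemma sub_eq (h : IsDyadicInterval k x y) : y - x = (1 / 2 : ℝ) ^ k := by
  obtain ⟨j, -, rfl, rfl⟩ := h
  ring

lemma lt (h : IsDyadicInterval k x y) : x < y := by
  rw [← sub_pos, h.sub_eq]
  positivity

lemma sub_eq_iff (h : IsDyadicInterval k x y) {l : ℕ} : y - x = (1 / 2 : ℝ) ^ l ↔ l = k := by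
  rw [h.sub_eq, pow_right_inj₀ (by norm_num) (by norm_num), eq_comm]

end IsDyadicInterval

lemma half_pow_eq_two_pow_sub_mul {m n : ℕ} (hmn : m ≤ n) :
    (1 / 2 : ℝ) ^ m = 2 ^ (n - m) * (1 / 2 : ℝ) ^ n := by
  rw [← pow_sub_mul_pow (1 / 2 : ℝ) hmn, ← mul_assoc, ← mul_pow]
  norm_num

lemma IsDyadic.eventually_exists_eq {x : ℝ} (hx : IsDyadic x) :
    ∀ᶠ n : ℕ in atTop, ∃ i : ℕ, i ≤ 2 ^ n ∧ x = i * (1 / 2 : ℝ) ^ n := by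
  obtain ⟨n₀, i, hi, rfl⟩ := hx
  filter_upwards [eventually_ge_atTop n₀] with n hn
  refine ⟨i * 2 ^ (n - n₀), ?_, ?_⟩
  · calc i * 2 ^ (n - n₀) ≤ 2 ^ n₀ * 2 ^ (n - n₀) := by gcongr
      _ = 2 ^ n := pow_mul_pow_sub 2 hn
  · rw [half_pow_eq_two_pow_sub_mul hn]
    push_cast
    ring

namespace DyadicChain

variable {s u t : ℝ} {K L : Multiset ℕ}

lemma append (hsu : DyadicChain s u K) (hut : DyadicChain u t L) : DyadicChain s t (K + L) := by
  induction hsu with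
  | nil => rwa [zero_add]
  | cons hstep _ ih => rw [Multiset.cons_add]; exact .cons hstep (ih hut)

lemma single {k j : ℕ} (hj : j < 2 ^ k) :
    DyadicChain (j * (1 / 2 : ℝ) ^ k) ((j + 1 : ℕ) * (1 / 2 : ℝ) ^ k) {k} :=
  .cons ⟨j, hj, rfl, by push_cast; rfl⟩ (.nil _)

lemma exists_seq (h : DyadicChain s t K) :
    ∃ (N : ℕ) (τ : ℕ → ℝ), τ 0 = s ∧ τ N = t ∧
      (∀ i < N, ∃ k ∈ K, IsDyadicInterval k (τ i) (τ (i + 1))) ∧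
      ∀ k, ((Finset.range N).filter
        (fun i => τ (i + 1) - τ i = (1 / 2 : ℝ) ^ k)).card = K.count k := by
  induction h with
  | nil s => exact ⟨0, fun _ => s, rfl, rfl, by simp, by simp⟩
  | @cons k s u t K hsu _ ih =>
    obtain ⟨N, τ, rfl, rfl, hstep, hcard⟩ := ih
    refine ⟨N + 1, fun | 0 => s | i + 1 => τ i, rfl, rfl, ?_, fun l => ?_⟩
    · rintro (_ | i) hi
      · exact ⟨k, Multiset.mem_cons_self k K, hsu⟩
      · obtain ⟨l, hl, hτ⟩ := hstep i (Nat.lt_of_succ_lt_succ hi)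
        exact ⟨l, Multiset.mem_cons_of_mem hl, hτ⟩
    · rw [Finset.card_filter, Finset.sum_range_succ', ← Finset.card_filter, hcard,
        Multiset.count_cons]
      change _ + (if τ 0 - s = _ then 1 else 0) = _
      simp only [hsu.sub_eq_iff]

end DyadicChain

lemma natCast_mul_half_pow_eq_two_mul (i n : ℕ) :
    (i : ℝ) * (1 / 2 : ℝ) ^ n = (2 * i : ℕ) * (1 / 2 : ℝ) ^ (n + 1) := by
  push_cast
  ring

lemma exists_dyadicChain_round_up {n a : ℕ} (ha : a ≤ 2 ^ (n + 1)) :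
    ∃ K ≤ {n + 1}, DyadicChain (a * (1 / 2 : ℝ) ^ (n + 1))
      (((a + 1) / 2 : ℕ) * (1 / 2 : ℝ) ^ n) K := by
  rw [natCast_mul_half_pow_eq_two_mul ((a + 1) / 2)]
  obtain ⟨c, rfl | rfl⟩ := a.even_or_odd'
  · rw [show 2 * ((2 * c + 1) / 2) = 2 * c by lia]
    exact ⟨0, Multiset.zero_le _, .nil _⟩
  · rw [show 2 * ((2 * c + 1 + 1) / 2) = 2 * c + 1 + 1 by lia]
    exact ⟨{n + 1}, le_rfl, .single (by lia)⟩

lemma exists_dyadicChain_round_down {n b : ℕ} (hb : b ≤ 2 ^ (n + 1)) :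
    ∃ K ≤ {n + 1}, DyadicChain ((b / 2 : ℕ) * (1 / 2 : ℝ) ^ n)
      (b * (1 / 2 : ℝ) ^ (n + 1)) K := by
  rw [natCast_mul_half_pow_eq_two_mul (b / 2)]
  obtain ⟨c, rfl | rfl⟩ := b.even_or_odd'
  · rw [show 2 * (2 * c / 2) = 2 * c by lia]
    exact ⟨0, Multiset.zero_le _, .nil _⟩
  · rw [show 2 * ((2 * c + 1) / 2) = 2 * c by lia]
    exact ⟨{n + 1}, le_rfl, .single (by lia)⟩

lemma exists_dyadicChain_of_le_add_two {n a b : ℕ} (hab : a ≤ b) (hb : b ≤ 2 ^ n)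
    (hba : b ≤ a + 2) :
    ∃ K ≤ 2 • {n}, DyadicChain (a * (1 / 2 : ℝ) ^ n) (b * (1 / 2 : ℝ) ^ n) K := by
  obtain rfl | rfl | rfl : b = a ∨ b = a + 1 ∨ b = a + 1 + 1 := by lia
  · exact ⟨0, Multiset.zero_le _, .nil _⟩
  · exact ⟨{n}, le_self_nsmul (Multiset.zero_le _) two_ne_zero, .single hb⟩
  · exact ⟨{n} + {n}, (two_nsmul _).ge, (DyadicChain.single (by lia)).append (.single hb)⟩

lemma two_nsmul_val_Ioc_add_one {m n : ℕ} (hmn : m ≤ n) :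
    2 • (Finset.Ioc m (n + 1)).val = {n + 1} + 2 • (Finset.Ioc m n).val + {n + 1} := by
  rw [← Finset.insert_Ioc_right_eq_Ioc_add_one hmn, Finset.insert_val_of_notMem (by simp),
    ← Multiset.singleton_add]
  abel

lemma exists_dyadicChain_of_le_add_two_pow {m n : ℕ} (hmn : m + 1 ≤ n) {a b : ℕ} (hab : a ≤ b)
    (hb : b ≤ 2 ^ n) (hba : b ≤ a + 2 ^ (n - m)) :
    ∃ K ≤ 2 • (Finset.Ioc m n).val,
      DyadicChain (a * (1 / 2 : ℝ) ^ n) (b * (1 / 2 : ℝ) ^ n) K := by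
  induction n, hmn using Nat.le_induction generalizing a b with
  | base =>
    simpa using exists_dyadicChain_of_le_add_two hab hb (by simpa using hba)
  | succ n hmn ih =>
    obtain rfl | hlt := hab.eq_or_lt
    · exact ⟨0, Multiset.zero_le _, .nil _⟩
    have hpow : 2 ^ (n + 1 - m) = 2 * 2 ^ (n - m) := by
      rw [Nat.succ_sub (by lia), pow_succ']
    obtain ⟨L, hL, left⟩ := exists_dyadicChain_round_up (hlt.le.trans hb)
    obtain ⟨K, hK, middle⟩ := ih (a := (a + 1) / 2) (b := b / 2) (by lia) (by lia) (by lia)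
    obtain ⟨R, hR, right⟩ := exists_dyadicChain_round_down hb
    refine ⟨L + K + R, ?_, (left.append middle).append right⟩
    rw [two_nsmul_val_Ioc_add_one (by lia)]
    gcongr

lemma exists_dyadicChain_of_sub_le {s t : ℝ} (hs : IsDyadic s) (ht : IsDyadic t) (hst : s ≤ t)
    {m : ℕ} (hm : t - s ≤ (1 / 2 : ℝ) ^ m) :
    ∃ K, (∀ k ∈ K, m < k) ∧ (∀ k, K.count k ≤ 2) ∧ DyadicChain s t K := by
  obtain ⟨n, ⟨⟨a, -, rfl⟩, b, hb, rfl⟩, hmn⟩ :=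
    ((hs.eventually_exists_eq.and ht.eventually_exists_eq).and (eventually_gt_atTop m)).exists
  have mesh_pos : (0 : ℝ) < (1 / 2) ^ n := by positivity
  have hab : a ≤ b := by exact_mod_cast le_of_mul_le_mul_right hst mesh_pos
  have hba : b ≤ a + 2 ^ (n - m) := by
    rw [half_pow_eq_two_pow_sub_mul hmn.le, ← sub_mul, mul_le_mul_iff_left₀ mesh_pos,
      sub_le_iff_le_add'] at hm
    exact_mod_cast hm
  obtain ⟨K, hK, hchain⟩ := exists_dyadicChain_of_le_add_two_pow hmn hab hb hba
  refine ⟨K, fun k hk => ?_, fun k => ?_, hchain⟩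
  · exact (Finset.mem_Ioc.mp (Multiset.mem_of_mem_nsmul (Multiset.mem_of_le hK hk))).1
  · calc K.count k ≤ 2 * (Finset.Ioc m n).val.count k := by
          simpa only [Multiset.count_nsmul] using Multiset.count_le_of_le k hK
      _ ≤ 2 * 1 := by gcongr; exact Multiset.nodup_iff_count_le_one.mp (Finset.nodup _) k

theorem dyadic_partition_exists_general {s t : ℝ} (hds : IsDyadic s) (hdt : IsDyadic t)
    (hst : s < t) {m : ℕ} (hm : t - s ≤ (1 / 2 : ℝ) ^ m) :
    ∃ (N : ℕ) (τ : ℕ → ℝ), 1 ≤ N ∧ τ 0 = s ∧ τ N = t ∧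
      (∀ i < N, τ i < τ (i + 1)) ∧
      (∀ i < N, ∃ k j : ℕ, m + 1 ≤ k ∧ j < 2 ^ k ∧
        τ i = j * (1 / 2 : ℝ) ^ k ∧ τ (i + 1) = (j + 1) * (1 / 2 : ℝ) ^ k) ∧
      (∀ k : ℕ, m + 1 ≤ k →
        ((Finset.range N).filter
          (fun i => τ (i + 1) - τ i = (1 / 2 : ℝ) ^ k)).card ≤ 2) := by
  obtain ⟨K, hlevel, hcount, hchain⟩ := exists_dyadicChain_of_sub_le hds hdt hst.le hm
  obtain ⟨N, τ, rfl, rfl, hstep, hcard⟩ := hchain.exists_seq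
  refine ⟨N, τ, ?_, rfl, rfl, fun i hi => ?_, fun i hi => ?_, fun k _ => ?_⟩
  · exact Nat.one_le_iff_ne_zero.mpr fun hN => hst.ne (by rw [hN])
  · obtain ⟨k, -, hk⟩ := hstep i hi
    exact hk.lt
  · obtain ⟨k, hkK, j, hj⟩ := hstep i hi
    exact ⟨k, j, hlevel k hkK, hj⟩
  · exact (hcard k).trans_le (hcount k)

/-- for dyadic rationals `s < t` in `[0,1]` and `m` with
`2^{−m−1} < t − s ≤ 2^{−m}`, there is a partition `s = τ₀ < … < τ_N = t` all of whose
intervals are dyadic intervals of level `k ≥ m+1`, with at most two intervals of each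
level `k`. -/
theorem dyadic_partition_exists (s t : ℝ) (hds : IsDyadic s) (hdt : IsDyadic t)
    (hst : s < t) (m : ℕ)
    (hm1 : (1 / 2 : ℝ) ^ (m + 1) < t - s) (hm2 : t - s ≤ (1 / 2 : ℝ) ^ m) :
    ∃ (N : ℕ) (τ : ℕ → ℝ), 1 ≤ N ∧ τ 0 = s ∧ τ N = t ∧
      (∀ i < N, τ i < τ (i + 1)) ∧
      (∀ i < N, ∃ k j : ℕ, m + 1 ≤ k ∧ j < 2 ^ k ∧
        τ i = j * (1 / 2 : ℝ) ^ k ∧ τ (i + 1) = (j + 1) * (1 / 2 : ℝ) ^ k) ∧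
      (∀ k : ℕ, m + 1 ≤ k →
        ((Finset.range N).filter
          (fun i => τ (i + 1) - τ i = (1 / 2 : ℝ) ^ k)).card ≤ 2) :=
  dyadic_partition_exists_general hds hdt hst hm2
end

section
/- Let X : [0,1] → ℝ and for each n ≥ 0 set K_n := max { |X_{t+2^{−n}} − X_t| : t ∈ D_n, t + 2^{−n} ≤ 1 }. Suppose that for some α ≥ 0 the series K_α := 2·Σ_{n≥0} 2^{nα} K_n converges. Then for all dyadic rationals s < t in [0,1], if m is the integer with 2^{−m−1} < t−s ≤ 2^{−m}, one has |X_t − X_s| ≤ 2·Σ_{n≥m+1} K_n, and consequently |X_t − X_s| ≤ K_α · |t−s|^α for all dyadic rationals s, t in [0,1]. -/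
noncomputable section

/-- `K_n := max { |X_{t,t+2⁻ⁿ}| : t ∈ D_n, t + 2⁻ⁿ ≤ 1 }`. -/
def dyadicMaxInc (X : ℝ → ℝ) (n : ℕ) : ℝ :=
  (Finset.range (2 ^ n)).sup'
    ⟨0, Finset.mem_range.mpr (by positivity)⟩
    (fun i => |X ((i + 1) * (1 / 2 : ℝ) ^ n) - X (i * (1 / 2 : ℝ) ^ n)|)

/-!
Refine the scale one level at a time. Let `i ≤ j` index two points of `D_(n+1)` with `i < j`.
Rounding `i` up and `j` down to even indices costs at most `2 * K_(n+1)`, moves both points into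
`D_n`, keeps them in order and does not increase their distance. Once the points lie in `D_(m+1)`,
at distance at most `2⁻ᵐ`, they are at most two grid steps apart, at a last cost of `2 * K_(m+1)`.
For the Hölder bound choose `m` with `2⁻ᵐ⁻¹ < |t - s| ≤ 2⁻ᵐ`: the weights `2^(nα)` of the tail
`n ≥ m + 1` are then at least `|t - s|^(-α)`.
-/

section GeometricWeights

variable {c : ℝ} {K : ℕ → ℝ}

lemma summable_of_summable_pow_mul (hc : 1 ≤ c) (hK : ∀ n, 0 ≤ K n)
    (hsum : Summable fun n ↦ c ^ n * K n) : Summable K :=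
  hsum.of_nonneg_of_le hK fun n ↦ le_mul_of_one_le_left (hK n) (one_le_pow₀ hc)

lemma pow_mul_tsum_nat_add_le_tsum_pow_mul (hc : 1 ≤ c) (hK : ∀ n, 0 ≤ K n)
    (hsum : Summable fun n ↦ c ^ n * K n) (N : ℕ) :
    c ^ N * ∑' n, K (n + N) ≤ ∑' n, c ^ n * K n := by
  have hc₀ : 0 ≤ c := zero_le_one.trans hc
  have hKN : Summable fun n ↦ K (n + N) :=
    (summable_nat_add_iff N).2 (summable_of_summable_pow_mul hc hK hsum)
  calc c ^ N * ∑' n, K (n + N)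
      = ∑' n, c ^ N * K (n + N) := tsum_mul_left.symm
    _ ≤ ∑' n, c ^ (n + N) * K (n + N) := by
        refine (hKN.mul_left _).tsum_le_tsum (fun n ↦ ?_) ((summable_nat_add_iff N).2 hsum)
        gcongr
        exacts [hK _, Nat.le_add_left N n]
    _ ≤ ∑' n, c ^ n * K n :=
        tsum_comp_le_tsum_of_inj hsum (fun n ↦ mul_nonneg (pow_nonneg hc₀ n) (hK n))
          (add_left_injective N)

end GeometricWeights

lemma one_le_two_rpow_pow_mul_rpow {α x : ℝ} {N : ℕ} (hα : 0 ≤ α) (hx : (1 / 2 : ℝ) ^ N ≤ x) :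
    1 ≤ ((2 : ℝ) ^ α) ^ N * x ^ α := by
  have hx₀ : 0 ≤ x := le_trans (by positivity) hx
  have h_scaled : 1 ≤ (2 : ℝ) ^ N * x := by
    calc (1 : ℝ) = 2 ^ N * (1 / 2) ^ N := by rw [← mul_pow]; norm_num
      _ ≤ 2 ^ N * x := by gcongr
  rw [Real.rpow_pow_comm zero_le_two, ← Real.mul_rpow (by positivity) hx₀]
  exact Real.one_le_rpow h_scaled hα

/-- The `i`-th point `i·2⁻ⁿ` of the grid of level `n`, which is the `i`-th point of `D_n` when
`i ≤ 2ⁿ`. -/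
def dyadicPoint (n i : ℕ) : ℝ :=
  i * (1 / 2 : ℝ) ^ n

lemma dyadicPoint_add (n i j : ℕ) :
    dyadicPoint n (i + j) = dyadicPoint n i + dyadicPoint n j := by
  simp only [dyadicPoint, Nat.cast_add, add_mul]

lemma dyadicPoint_add_two_pow_mul (n d i : ℕ) :
    dyadicPoint (n + d) (2 ^ d * i) = dyadicPoint n i := by
  simp only [dyadicPoint, Nat.cast_mul, Nat.cast_pow, Nat.cast_ofNat, pow_add, one_div_pow]
  field_simp

lemma dyadicPoint_le_dyadicPoint {n i j : ℕ} :
    dyadicPoint n i ≤ dyadicPoint n j ↔ i ≤ j := by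
  rw [dyadicPoint, dyadicPoint, mul_le_mul_iff_left₀ (by positivity), Nat.cast_le]

lemma dyadicPoint_one (n : ℕ) : dyadicPoint n 1 = (1 / 2 : ℝ) ^ n := by
  rw [dyadicPoint, Nat.cast_one, one_mul]

lemma le_add_two_pow_of_dyadicPoint_sub_le {m d i j : ℕ}
    (h : dyadicPoint (m + d) j - dyadicPoint (m + d) i ≤ (1 / 2 : ℝ) ^ m) : j ≤ i + 2 ^ d := by
  rw [← dyadicPoint_le_dyadicPoint (n := m + d), dyadicPoint_add, ← mul_one (2 ^ d),
    dyadicPoint_add_two_pow_mul, dyadicPoint_one]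
  linarith

namespace IsDyadic

lemma mem_Icc {x : ℝ} (hx : IsDyadic x) : x ∈ Set.Icc (0 : ℝ) 1 := by
  obtain ⟨n, i, hi, rfl⟩ := hx
  refine ⟨by positivity, ?_⟩
  rw [one_div_pow, mul_one_div]
  exact div_le_one_of_le₀ (mod_cast hi) (by positivity)

lemma eventually_eq_dyadicPoint {x : ℝ} (hx : IsDyadic x) :
    ∀ᶠ n in Filter.atTop, ∃ i ≤ 2 ^ n, x = dyadicPoint n i := by
  obtain ⟨n, i, hi, hx⟩ := hx
  filter_upwards [Filter.eventually_ge_atTop n] with N hN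
  obtain ⟨d, rfl⟩ := Nat.exists_eq_add_of_le hN
  refine ⟨2 ^ d * i, ?_, hx.trans (dyadicPoint_add_two_pow_mul n d i).symm⟩
  rw [pow_add, mul_comm]
  gcongr

end IsDyadic

/-- `K n` bounds the increments of `X` between neighbouring points of `D_n`, for every level `n`.
The sequence `dyadicMaxInc X` of the maximal increments is the smallest such `K`; an arbitrary
bound keeps the chaining argument free of maxima and meaningful in any pseudometric space. -/
def HasDyadicIncrementBound {E : Type*} [PseudoMetricSpace E] (X : ℝ → E) (K : ℕ → ℝ) : Prop :=
  ∀ n i, i < 2 ^ n → dist (X (dyadicPoint n (i + 1))) (X (dyadicPoint n i)) ≤ K n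

lemma hasDyadicIncrementBound_dyadicMaxInc (X : ℝ → ℝ) :
    HasDyadicIncrementBound X (dyadicMaxInc X) := by
  intro n i hi
  rw [Real.dist_eq, dyadicPoint, dyadicPoint, Nat.cast_add_one]
  exact Finset.le_sup' (fun i : ℕ ↦ |X ((i + 1) * (1 / 2 : ℝ) ^ n) - X (i * (1 / 2 : ℝ) ^ n)|)
    (Finset.mem_range.2 hi)

namespace HasDyadicIncrementBound

variable {E : Type*} [PseudoMetricSpace E] {X : ℝ → E} {K : ℕ → ℝ}

lemma nonneg (hX : HasDyadicIncrementBound X K) (n : ℕ) : 0 ≤ K n :=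
  dist_nonneg.trans (hX n 0 (by positivity))

lemma dist_le_of_le_add_one (hX : HasDyadicIncrementBound X K) {n i j : ℕ} (hij : i ≤ j)
    (hji : j ≤ i + 1) (hj : j ≤ 2 ^ n) :
    dist (X (dyadicPoint n j)) (X (dyadicPoint n i)) ≤ K n := by
  obtain rfl | rfl : j = i ∨ j = i + 1 := by omega
  · simpa only [dist_self] using hX.nonneg n
  · exact hX n i hj

lemma dist_le_of_le_add_two (hX : HasDyadicIncrementBound X K) {n i j : ℕ} (hij : i ≤ j)
    (hji : j ≤ i + 2) (hj : j ≤ 2 ^ n) :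
    dist (X (dyadicPoint n j)) (X (dyadicPoint n i)) ≤ 2 * K n := by
  obtain ⟨k, hik, hki, hkj, hjk⟩ : ∃ k, i ≤ k ∧ k ≤ i + 1 ∧ k ≤ j ∧ j ≤ k + 1 :=
    ⟨(i + j) / 2, by omega⟩
  have h_upper := hX.dist_le_of_le_add_one hkj hjk hj
  have h_lower := hX.dist_le_of_le_add_one hik hki (hkj.trans hj)
  linarith [dist_triangle (X (dyadicPoint n j)) (X (dyadicPoint n k)) (X (dyadicPoint n i))]

lemma dist_succ_le_add_dist (hX : HasDyadicIncrementBound X K) {n i j : ℕ} (hij : i < j)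
    (hj : j ≤ 2 ^ (n + 1)) :
    dist (X (dyadicPoint (n + 1) j)) (X (dyadicPoint (n + 1) i)) ≤
      2 * K (n + 1) + dist (X (dyadicPoint n (j / 2))) (X (dyadicPoint n ((i + 1) / 2))) := by
  have h_round_down : dist (X (dyadicPoint (n + 1) j)) (X (dyadicPoint n (j / 2))) ≤ K (n + 1) := by
    rw [← dyadicPoint_add_two_pow_mul n 1]
    exact hX.dist_le_of_le_add_one (by omega) (by omega) hj
  have h_round_up :
      dist (X (dyadicPoint n ((i + 1) / 2))) (X (dyadicPoint (n + 1) i)) ≤ K (n + 1) := by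
    rw [← dyadicPoint_add_two_pow_mul n 1]
    exact hX.dist_le_of_le_add_one (by omega) (by omega) (by omega)
  linarith [dist_triangle4 (X (dyadicPoint (n + 1) j)) (X (dyadicPoint n (j / 2)))
    (X (dyadicPoint n ((i + 1) / 2))) (X (dyadicPoint (n + 1) i))]

lemma dist_le_sum_range (hX : HasDyadicIncrementBound X K) {n d i j : ℕ} (hij : i ≤ j)
    (hji : j ≤ i + 2 ^ (d + 1)) (hj : j ≤ 2 ^ (n + d)) :
    dist (X (dyadicPoint (n + d) j)) (X (dyadicPoint (n + d) i)) ≤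
      2 * ∑ k ∈ Finset.range (d + 1), K (k + n) := by
  induction d generalizing i j with
  | zero => simpa using hX.dist_le_of_le_add_two hij hji hj
  | succ d ih =>
    rcases hij.eq_or_lt with rfl | hlt
    · rw [dist_self]
      exact mul_nonneg zero_le_two (Finset.sum_nonneg fun k _ ↦ hX.nonneg (k + n))
    have h_coarse := ih (i := (i + 1) / 2) (j := j / 2) (by omega) (by omega)
      (Nat.div_le_of_le_mul (hj.trans_eq (pow_succ' 2 (n + d))))
    calc dist (X (dyadicPoint (n + d + 1) j)) (X (dyadicPoint (n + d + 1) i))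
        ≤ 2 * K (n + d + 1) +
            dist (X (dyadicPoint (n + d) (j / 2))) (X (dyadicPoint (n + d) ((i + 1) / 2))) :=
          hX.dist_succ_le_add_dist hlt hj
      _ ≤ 2 * K (n + d + 1) + 2 * ∑ k ∈ Finset.range (d + 1), K (k + n) := by gcongr
      _ = 2 * ∑ k ∈ Finset.range (d + 1 + 1), K (k + n) := by
          rw [Finset.sum_range_succ _ (d + 1), add_comm (d + 1) n, ← add_assoc n d 1]
          ring

theorem dist_le_two_mul_tsum (hX : HasDyadicIncrementBound X K) (hK : Summable K) {s t : ℝ}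
    (hs : IsDyadic s) (ht : IsDyadic t) {m : ℕ} (hst : |t - s| ≤ (1 / 2 : ℝ) ^ m) :
    dist (X t) (X s) ≤ 2 * ∑' n, K (n + (m + 1)) := by
  wlog hle : s ≤ t generalizing s t
  · rw [dist_comm]
    exact this ht hs (abs_sub_comm t s ▸ hst) (le_of_not_ge hle)
  obtain ⟨N, ⟨⟨i, -, rfl⟩, j, hj, rfl⟩, hN⟩ := ((hs.eventually_eq_dyadicPoint.and
    ht.eventually_eq_dyadicPoint).and (Filter.eventually_ge_atTop (m + 1))).exists
  obtain ⟨d, rfl⟩ := Nat.exists_eq_add_of_le hN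
  have hij : i ≤ j := dyadicPoint_le_dyadicPoint.1 hle
  have hji : j ≤ i + 2 ^ (d + 1) := by
    rw [Nat.add_right_comm m 1 d] at hst
    exact le_add_two_pow_of_dyadicPoint_sub_le ((le_abs_self _).trans hst)
  refine (hX.dist_le_sum_range hij hji hj).trans ?_
  gcongr
  exact ((summable_nat_add_iff (m + 1)).2 hK).sum_le_tsum _ fun k _ ↦ hX.nonneg _

theorem dist_le_mul_rpow (hX : HasDyadicIncrementBound X K) {α : ℝ} (hα : 0 ≤ α)
    (hsum : Summable fun n ↦ ((2 : ℝ) ^ α) ^ n * K n) {s t : ℝ} (hs : IsDyadic s)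
    (ht : IsDyadic t) :
    dist (X t) (X s) ≤ (2 * ∑' n, ((2 : ℝ) ^ α) ^ n * K n) * |t - s| ^ α := by
  have hc : 1 ≤ (2 : ℝ) ^ α := Real.one_le_rpow one_le_two hα
  rcases eq_or_ne s t with rfl | hne
  · rw [dist_self]
    have h_term_nonneg : ∀ n, 0 ≤ ((2 : ℝ) ^ α) ^ n * K n := fun n ↦
      mul_nonneg (by positivity) (hX.nonneg n)
    exact mul_nonneg (mul_nonneg zero_le_two (tsum_nonneg h_term_nonneg)) (by positivity)
  obtain ⟨m, hm_lt, hm_le⟩ := exists_nat_pow_near_of_lt_one (abs_sub_pos.2 hne.symm)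
    (Real.dist_le_of_mem_Icc_01 ht.mem_Icc hs.mem_Icc) one_half_pos one_half_lt_one
  have h_tail_nonneg : 0 ≤ ∑' n, K (n + (m + 1)) := tsum_nonneg fun n ↦ hX.nonneg _
  calc dist (X t) (X s)
      ≤ 2 * ∑' n, K (n + (m + 1)) :=
        hX.dist_le_two_mul_tsum (summable_of_summable_pow_mul hc hX.nonneg hsum) hs ht hm_le
    _ ≤ 2 * ((((2 : ℝ) ^ α) ^ (m + 1) * |t - s| ^ α) * ∑' n, K (n + (m + 1))) := by
        gcongr
        exact le_mul_of_one_le_left h_tail_nonneg (one_le_two_rpow_pow_mul_rpow hα hm_lt.le)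
    _ = 2 * (((2 : ℝ) ^ α) ^ (m + 1) * ∑' n, K (n + (m + 1))) * |t - s| ^ α := by ring
    _ ≤ (2 * ∑' n, ((2 : ℝ) ^ α) ^ n * K n) * |t - s| ^ α := by
        gcongr
        exact pow_mul_tsum_nat_add_le_tsum_pow_mul hc hX.nonneg hsum (m + 1)

end HasDyadicIncrementBound

theorem dyadic_holder_bound_general {E : Type*} [PseudoMetricSpace E] {X : ℝ → E} {K : ℕ → ℝ}
    (hX : HasDyadicIncrementBound X K) {α : ℝ} (hα : 0 ≤ α)
    (hsum : Summable fun n ↦ ((2 : ℝ) ^ α) ^ n * K n) {s t : ℝ} (hs : IsDyadic s)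
    (ht : IsDyadic t) :
    (∀ m : ℕ, |t - s| ≤ (1 / 2 : ℝ) ^ m → dist (X t) (X s) ≤ 2 * ∑' n, K (n + (m + 1))) ∧
    dist (X t) (X s) ≤ (2 * ∑' n, ((2 : ℝ) ^ α) ^ n * K n) * |t - s| ^ α :=
  have hK : Summable K :=
    summable_of_summable_pow_mul (Real.one_le_rpow one_le_two hα) hX.nonneg hsum
  ⟨fun _ hm ↦ hX.dist_le_two_mul_tsum hK hs ht hm, hX.dist_le_mul_rpow hα hsum hs ht⟩

/-- if `K_α := 2·Σ_{n≥0} 2^{nα} K_n` converges, then for dyadic `s < t`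
with `2^{−m−1} < t−s ≤ 2^{−m}` one has `|X_t − X_s| ≤ 2·Σ_{n≥m+1} K_n`, and consequently
`|X_t − X_s| ≤ K_α·|t−s|^α` for all dyadic `s, t` in `[0,1]`. -/
theorem dyadic_holder_bound (X : ℝ → ℝ) (α : ℝ) (hα : 0 ≤ α)
    (hsum : Summable (fun n : ℕ => ((2 : ℝ) ^ α) ^ n * dyadicMaxInc X n)) :
    (∀ s t : ℝ, IsDyadic s → IsDyadic t → s < t → ∀ m : ℕ,
      (1 / 2 : ℝ) ^ (m + 1) < t - s → t - s ≤ (1 / 2 : ℝ) ^ m →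
      |X t - X s| ≤ 2 * ∑' n : ℕ, dyadicMaxInc X (n + (m + 1))) ∧
    (∀ s t : ℝ, IsDyadic s → IsDyadic t →
      |X t - X s| ≤ (2 * ∑' n : ℕ, ((2 : ℝ) ^ α) ^ n * dyadicMaxInc X n) * |t - s| ^ α) := by
  have h {s t : ℝ} := dyadic_holder_bound_general (hasDyadicIncrementBound_dyadicMaxInc X) hα hsum
    (s := s) (t := t)
  exact ⟨fun s t hs ht hst m _ hm ↦ (h hs ht).1 m (by rwa [abs_of_pos (sub_pos.2 hst)]),
    fun s t hs ht ↦ (h hs ht).2⟩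

end
end
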